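/- arXiv:2006.04355 — 9 statements merged into one kernel-verified Lean document; each statement's English description precedes it below -/
import Mathlib

section
/- Let r and n be integers with 2 ≤ r and n ≥ r+1, and let G be a K_{r+1}-saturated simple graph on n vertices. Then the sum over all vertices v of G of d(v)², where d(v) denotes the degree of v, is at least (n-1)²(r-1) + (r-1)²(n-r+1). -/
open SimpleGraph

/-- A graph `G` is `K_r`-saturated if it contains no `r`-clique, but adding any edge
between distinct non-adjacent vertices creates an `r`-clique. -/
def IsKSaturated {V : Type*} (r : ℕ) (G : SimpleGraph V) : Prop :=
  G.CliqueFree r ∧ ∀ u v : V, u ≠ v → ¬ G.Adj u v →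
    ¬ (G ⊔ SimpleGraph.fromEdgeSet {s(u, v)}).CliqueFree r

/-- Bollobás set-pair inequality. -/
lemma bollobas_aux {ι α : Type*} [DecidableEq α] : ∀ (m : ℕ) (X : Finset α) (_ : X.card = m)
    (I : Finset ι) (A B : ι → Finset α)
    (_ : ∀ i ∈ I, A i ⊆ X) (_ : ∀ i ∈ I, B i ⊆ X) (_ : ∀ i ∈ I, Disjoint (A i) (B i))
    (_ : ∀ i ∈ I, ∀ j ∈ I, i ≠ j → ¬ Disjoint (A i) (B j)),
    ∑ i ∈ I, (1 / (((A i).card + (B i).card).choose (A i).card : ℚ)) ≤ 1 := by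
  intro m
  induction m with
  | zero =>
    intro X hX I A B hA hB hAB hc
    have hX0 : X = ∅ := Finset.card_eq_zero.mp hX
    subst hX0
    have hB0 : ∀ i ∈ I, B i = ∅ := fun i hi => Finset.subset_empty.mp (hB i hi)
    have hA0 : ∀ i ∈ I, A i = ∅ := fun i hi => Finset.subset_empty.mp (hA i hi)
    have h1 : I.card ≤ 1 := by
      rw [Finset.card_le_one]
      intro i hi j hj
      by_contra hne
      exact hc i hi j hj hne (by simp [hB0 j hj])
    rw [Finset.sum_congr rfl (g := fun _ => (1 : ℚ)) (fun i hi => by simp [hB0 i hi, hA0 i hi])]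
    simpa using h1
  | succ m ih =>
    intro X hX I A B hA hB hAB hc
    by_cases hemp : ∃ i ∈ I, B i = ∅
    · obtain ⟨i, hi, hBi⟩ := hemp
      have hI : I = {i} := by
        apply Finset.eq_singleton_iff_unique_mem.mpr ⟨hi, ?_⟩
        intro j hj
        by_contra hne
        exact hc j hj i hi hne (by simp [hBi])
      subst hI
      simp [hBi]
    · push Not at hemp
      have key : ∀ x ∈ X, ∑ i ∈ I with x ∉ A i,
          (1 / (((A i).card + ((B i).erase x).card).choose (A i).card : ℚ)) ≤ 1 := by
        intro x hx
        apply ih (X.erase x) (by rw [Finset.card_erase_of_mem hx, hX]; rfl)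
          (I.filter (fun i => x ∉ A i)) A (fun i => (B i).erase x)
        · intro i hi
          rw [Finset.mem_filter] at hi
          exact Finset.subset_erase.mpr ⟨hA i hi.1, hi.2⟩
        · intro i hi
          rw [Finset.mem_filter] at hi
          exact Finset.erase_subset_erase x (hB i hi.1)
        · intro i hi
          rw [Finset.mem_filter] at hi
          exact (hAB i hi.1).mono_right (Finset.erase_subset _ _)
        · intro i hi j hj hne hd
          rw [Finset.mem_filter] at hi hj
          apply hc i hi.1 j hj.1 hne
          rw [Finset.disjoint_left] at hd ⊢
          intro a ha hb
          exact hd ha (Finset.mem_erase.mpr ⟨fun h => hi.2 (h ▸ ha), hb⟩)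
      have key2 := Finset.sum_le_sum key
      simp_rw [Finset.sum_filter] at key2
      rw [Finset.sum_comm] at key2
      have per : ∀ i ∈ I, (∑ x ∈ X, if x ∉ A i then
          (1 / (((A i).card + ((B i).erase x).card).choose (A i).card : ℚ)) else 0)
          = (X.card : ℚ) * (1 / (((A i).card + (B i).card).choose (A i).card : ℚ)) := by
        intro i hi
        have hXs : X = A i ∪ (B i ∪ (X \ (A i ∪ B i))) := by
          rw [← Finset.union_assoc, Finset.union_sdiff_of_subset
            (Finset.union_subset (hA i hi) (hB i hi))]
        have hd1 : Disjoint (A i) (B i ∪ (X \ (A i ∪ B i))) := by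
          have := hAB i hi
          rw [Finset.disjoint_left] at this ⊢
          intro a ha; simp [ha, this ha]
        have hd2 : Disjoint (B i) (X \ (A i ∪ B i)) := by
          rw [Finset.disjoint_left]
          intro a ha; simp [ha]
        have hdAB := hAB i hi
        rw [Finset.disjoint_left] at hdAB
        have hcard : X.card = (A i).card + ((B i).card + (X \ (A i ∪ B i)).card) := by
          conv_lhs => rw [hXs]
          rw [Finset.card_union_of_disjoint hd1, Finset.card_union_of_disjoint hd2]
        set R := X \ (A i ∪ B i) with hR
        rw [hcard]
        conv_lhs => rw [hXs]
        rw [Finset.sum_union hd1, Finset.sum_union hd2]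
        have s1 : (∑ x ∈ A i, if x ∉ A i then
          (1 / (((A i).card + ((B i).erase x).card).choose (A i).card : ℚ)) else 0) = 0 :=
          Finset.sum_eq_zero (fun x hx => by simp [hx])
        obtain ⟨b, hb⟩ : ∃ b, (B i).card = b + 1 :=
          Nat.exists_eq_succ_of_ne_zero (Finset.card_pos.mpr (hemp i hi)).ne'
        have s2 : (∑ x ∈ B i, if x ∉ A i then
          (1 / (((A i).card + ((B i).erase x).card).choose (A i).card : ℚ)) else 0)
            = (b + 1) * (1 / (((A i).card + b).choose (A i).card : ℚ)) := by
          rw [Finset.sum_congr rfl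
            (g := fun _ => (1 / (((A i).card + b).choose (A i).card : ℚ)))]
          · simp [hb]
          · intro x hx
            have hxa : x ∉ A i := fun h => hdAB h hx
            rw [if_pos hxa, Finset.card_erase_of_mem hx, hb]; rfl
        have s3 : (∑ x ∈ R, if x ∉ A i then
          (1 / (((A i).card + ((B i).erase x).card).choose (A i).card : ℚ)) else 0)
            = R.card * (1 / (((A i).card + (B i).card).choose (A i).card : ℚ)) := by
          rw [Finset.sum_congr rfl
            (g := fun _ => (1 / (((A i).card + (B i).card).choose (A i).card : ℚ)))]
          · simp
          · intro x hx
            simp only [hR, Finset.mem_sdiff, Finset.mem_union, not_or] at hx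
            rw [if_pos hx.2.1, Finset.erase_eq_of_notMem hx.2.2]
        rw [s1, s2, s3, hb]
        have hch : (((A i).card + (b + 1)).choose (A i).card : ℚ) * (b + 1)
            = ((A i).card + b + 1) * (((A i).card + b).choose (A i).card : ℚ) := by
          have := Nat.choose_mul_succ_eq ((A i).card + b) (A i).card
          have h2 : (A i).card + b + 1 - (A i).card = b + 1 := by omega
          rw [h2] at this
          have h3 : (((A i).card + b).choose (A i).card : ℚ) * ((A i).card + b + 1)
            = (((A i).card + b + 1).choose (A i).card : ℚ) * (b + 1) := by exact_mod_cast this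
          rw [← add_assoc, ← h3, mul_comm]
        have p1 : (((A i).card + (b + 1)).choose (A i).card : ℚ) ≠ 0 := by
          exact_mod_cast (Nat.choose_pos (by omega)).ne'
        have p2 : (((A i).card + b).choose (A i).card : ℚ) ≠ 0 := by
          exact_mod_cast (Nat.choose_pos (by omega)).ne'
        push_cast
        field_simp
        linear_combination hch
      rw [Finset.sum_congr rfl per, ← Finset.mul_sum] at key2
      simp only [Finset.sum_const, nsmul_eq_mul, mul_one] at key2
      have hpos : (0 : ℚ) < X.card := by rw [hX]; positivity
      exact le_of_mul_le_mul_left (by simpa using key2) hpos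

lemma sat_pairs {V : Type*} [DecidableEq V] (G : SimpleGraph V) (S : Finset V) (k : ℕ)
    (E : Finset (Sym2 V)) (Q : Sym2 V → Finset V)
    (hE : ∀ e ∈ E, e ∈ Gᶜ.edgeSet)
    (hS : ∀ e ∈ E, e.toFinset ⊆ S) (hQ : ∀ e ∈ E, Q e ⊆ S) (hk : ∀ e ∈ E, (Q e).card = k)
    (hcl : ∀ e ∈ E, G.IsClique (Q e : Set V))
    (hadj : ∀ e ∈ E, ∀ q ∈ Q e, ∀ x ∈ e, G.Adj q x) :
    E.card ≤ (S.card - k).choose 2 := by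
  rcases E.eq_empty_or_nonempty with h0 | ⟨e0, he0⟩
  · simp [h0]
  have hA2 : ∀ e ∈ E, e.toFinset.card = 2 := fun e he =>
    Sym2.card_toFinset_of_not_isDiag e (Gᶜ.not_isDiag_of_mem_edgeSet (hE e he))
  have hdis : ∀ e ∈ E, Disjoint e.toFinset (Q e) := by
    intro e he
    rw [Finset.disjoint_left]
    intro a ha hq
    exact G.loopless.irrefl a (hadj e he a hq a (Sym2.mem_toFinset.mp ha))
  have hB : ∀ e ∈ E, (S \ (e.toFinset ∪ Q e)).card + 2 + k = S.card := by
    intro e he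
    have h1 := Finset.card_sdiff_add_card_eq_card (Finset.union_subset (hS e he) (hQ e he))
    rw [Finset.card_union_of_disjoint (hdis e he), hA2 e he, hk e he] at h1
    omega
  have := bollobas_aux S.card S rfl E (fun e => e.toFinset) (fun e => S \ (e.toFinset ∪ Q e))
    hS (fun e _ => Finset.sdiff_subset)
    (fun e he => by
      rw [Finset.disjoint_left]; intro a ha; simp only [Finset.mem_sdiff, Finset.mem_union]; tauto)
    (by
      intro e he e' he' hne hd
      apply hne
      have hsub : ∀ x ∈ e, x ∈ e' ∨ x ∈ Q e' := by
        intro x hx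
        rw [Finset.disjoint_left] at hd
        have hx' := Sym2.mem_toFinset.mpr hx
        have h1 := hd hx'
        have h2 := hS e he hx'
        simp only [Finset.mem_sdiff, Finset.mem_union, Sym2.mem_toFinset] at h1
        tauto
      have hee := hE e he
      induction e with
      | h x y =>
      rw [mem_edgeSet, compl_adj] at hee
      rcases hsub x (Sym2.mem_mk_left x y) with h1 | h1 <;>
        rcases hsub y (Sym2.mem_mk_right x y) with h2 | h2
      · exact ((Sym2.mem_and_mem_iff hee.1).mp ⟨h1, h2⟩).symm
      · exact absurd (hadj e' he' y h2 x h1).symm hee.2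
      · exact absurd (hadj e' he' x h1 y h2) hee.2
      · exact absurd (hcl e' he' h1 h2 hee.1) hee.2)
  rw [Finset.sum_congr rfl (g := fun _ => (1 / ((S.card - k).choose 2 : ℚ)))] at this
  · have hp : (0 : ℚ) < ((S.card - k).choose 2 : ℚ) := by
      exact_mod_cast Nat.choose_pos (by have := hB e0 he0; omega)
    simp only [Finset.sum_const, nsmul_eq_mul, mul_one_div] at this
    rw [div_le_one hp] at this
    exact_mod_cast this
  · intro e he
    have h1 := hB e he
    simp only [hA2 e he]
    congr 3
    omega

lemma sat_clique {V : Type*} [DecidableEq V] (r : ℕ) (hr : 1 ≤ r) (G : SimpleGraph V)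
    (hsat : IsKSaturated (r + 1) G) (e : Sym2 V) (he : e ∈ Gᶜ.edgeSet) :
    ∃ K : Finset V, K.card = r - 1 ∧ G.IsClique (K : Set V) ∧ ∀ q ∈ K, ∀ x ∈ e, G.Adj q x := by
  induction e with
  | h u v =>
  rw [mem_edgeSet, compl_adj] at he
  have h := hsat.2 u v he.1 he.2
  simp only [CliqueFree, not_forall, not_not] at h
  obtain ⟨s, hs⟩ := h
  have hadj : ∀ a ∈ s, ∀ b ∈ s, a ≠ b → G.Adj a b ∨ (a = u ∧ b = v) ∨ (a = v ∧ b = u) := by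
    intro a ha b hb hab
    have := hs.1 ha hb hab
    simp only [sup_adj, fromEdgeSet_adj, Set.mem_singleton_iff, Sym2.eq_iff] at this
    tauto
  have huv : u ∈ s ∧ v ∈ s := by
    by_contra hcon
    apply hsat.1 s
    refine ⟨?_, hs.2⟩
    intro a ha b hb hab
    rcases hadj a ha b hb hab with h | ⟨rfl, rfl⟩ | ⟨rfl, rfl⟩
    · exact h
    · exact absurd ⟨ha, hb⟩ hcon
    · exact absurd ⟨hb, ha⟩ hcon
  refine ⟨(s.erase u).erase v, ?_, ?_, ?_⟩
  · rw [Finset.card_erase_of_mem (Finset.mem_erase.mpr ⟨he.1.symm, huv.2⟩),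
      Finset.card_erase_of_mem huv.1, hs.2]
    omega
  · intro a ha b hb hab
    simp only [Finset.coe_erase, Set.mem_diff, Finset.mem_coe, Set.mem_singleton_iff] at ha hb
    rcases hadj a ha.1.1 b hb.1.1 hab with h | h | h
    · exact h
    · exact absurd h.1 ha.1.2
    · exact absurd h.1 ha.2
  · intro q hq x hx
    simp only [Finset.mem_erase] at hq
    rw [Sym2.mem_iff] at hx
    rcases hx with rfl | rfl
    · rcases hadj q hq.2.2 x huv.1 hq.2.1 with h | h | h
      · exact h
      · exact absurd h.1 hq.2.1
      · exact absurd h.1 hq.1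
    · rcases hadj q hq.2.2 x huv.2 hq.1 with h | h | h
      · exact h
      · exact absurd h.1 hq.2.1
      · exact absurd h.1 hq.1

lemma two_choose_le (d k : ℕ) :
    2 * (((d - k).choose 2 : ℕ) : ℤ) ≤ ((d : ℤ) - k) * ((d : ℤ) - k - 1) := by
  rcases le_total k d with h | h
  · obtain ⟨t, rfl⟩ := Nat.exists_eq_add_of_le h
    have h1 : k + t - k = t := by omega
    rw [h1]
    cases t with
    | zero => simp
    | succ t =>
      have := Nat.triangle_succ t
      have h2 : (t + 1).choose 2 * 2 = (t + 1) * t := by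
        rw [Nat.choose_two_right]
        exact Nat.div_mul_cancel (Nat.even_mul_pred_self (t + 1)).two_dvd
      zify at h2
      push_cast
      linarith
  · rw [Nat.sub_eq_zero_of_le h]
    simp only [Nat.choose_zero_succ, Nat.cast_zero, mul_zero]
    have : (d : ℤ) ≤ k := by exact_mod_cast h
    nlinarith

theorem stmt_0 {V : Type*} [Fintype V] [DecidableEq V] (r n : ℕ) (hr : 2 ≤ r)
    (hn : r + 1 ≤ n) (hcard : Fintype.card V = n)
    (G : SimpleGraph V) [DecidableRel G.Adj] (hsat : IsKSaturated (r + 1) G) :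
    ((n : ℤ) - 1) ^ 2 * ((r : ℤ) - 1) + ((r : ℤ) - 1) ^ 2 * ((n : ℤ) - (r : ℤ) + 1)
      ≤ ∑ v : V, (G.degree v : ℤ) ^ 2 := by
  have hK := sat_clique r (by omega) G hsat
  choose! K hKc hKcl hKadj using hK
  set E := Gᶜ.edgeFinset with hEdef
  have hE : ∀ e ∈ E, e ∈ Gᶜ.edgeSet := fun e he => mem_edgeFinset.mp he
  -- global bound
  have hglob : E.card ≤ (n - (r - 1)).choose 2 := by
    have := sat_pairs G Finset.univ (r - 1) E K hE (fun _ _ => Finset.subset_univ _)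
      (fun _ _ => Finset.subset_univ _) (fun e he => hKc e (hE e he))
      (fun e he => hKcl e (hE e he)) (fun e he => hKadj e (hE e he))
    rwa [Finset.card_univ, hcard] at this
  -- local bound
  have hloc : ∀ v : V, (E.filter (fun e => v ∈ K e)).card ≤ (G.degree v - (r - 2)).choose 2 := by
    intro v
    have hE' : ∀ e ∈ E.filter (fun e => v ∈ K e), e ∈ Gᶜ.edgeSet ∧ v ∈ K e := fun e he =>
      ⟨hE e (Finset.mem_filter.mp he).1, (Finset.mem_filter.mp he).2⟩
    have := sat_pairs G (G.neighborFinset v) (r - 2) (E.filter (fun e => v ∈ K e))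
      (fun e => (K e).erase v) (fun e he => (hE' e he).1)
      (fun e he x hx => by
        rw [mem_neighborFinset]
        exact hKadj e (hE' e he).1 v (hE' e he).2 x (Sym2.mem_toFinset.mp hx))
      (fun e he x hx => by
        rw [mem_neighborFinset]
        rw [Finset.mem_erase] at hx
        exact hKcl e (hE' e he).1 (hE' e he).2 hx.2 hx.1.symm)
      (fun e he => by
        rw [Finset.card_erase_of_mem (hE' e he).2, hKc e (hE' e he).1]; omega)
      (fun e he => (hKcl e (hE' e he).1).subset (by simp))
      (fun e he q hq => hKadj e (hE' e he).1 q (Finset.mem_erase.mp hq).2)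
    rwa [card_neighborFinset_eq_degree] at this
  have hdc : ∑ v : V, (E.filter (fun e => v ∈ K e)).card = E.card * (r - 1) := by
    simp_rw [Finset.card_filter]
    rw [Finset.sum_comm, Finset.sum_congr rfl (g := fun _ => r - 1)]
    · simp
    · intro e he
      rw [← Finset.card_filter]
      simp [hKc e (hE e he)]
  have hdegsum : (∑ v : V, (G.degree v : ℤ)) = n * (n - 1) - 2 * E.card := by
    have h1 := Gᶜ.sum_degrees_eq_twice_card_edges
    have h2 : ∀ v : V, (Gᶜ.degree v : ℤ) = n - 1 - G.degree v := by
      intro v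
      have h3 := G.degree_compl v
      have h4 := G.degree_lt_card_verts v
      rw [hcard] at h3 h4
      omega
    have h5 : (∑ v : V, (Gᶜ.degree v : ℤ)) = 2 * E.card := by exact_mod_cast h1
    simp_rw [h2] at h5
    rw [Finset.sum_sub_distrib] at h5
    simp only [Finset.sum_const, Finset.card_univ, hcard, nsmul_eq_mul] at h5
    linarith
  have hsum : 2 * ((E.card : ℤ) * (r - 1)) ≤
      ∑ v : V, ((G.degree v : ℤ) - (r - 2)) * ((G.degree v : ℤ) - (r - 2) - 1) := by
    have h1 : ((∑ v : V, (E.filter (fun e => v ∈ K e)).card : ℕ) : ℤ) = E.card * (r - 1) := by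
      rw [hdc]; push_cast [Nat.cast_sub (by omega : 1 ≤ r)]; ring
    rw [← h1]
    push_cast
    rw [Finset.mul_sum]
    apply Finset.sum_le_sum
    intro v _
    have h2 := two_choose_le (G.degree v) (r - 2)
    have h3 : (((E.filter (fun e => v ∈ K e)).card : ℕ) : ℤ)
      ≤ ((G.degree v - (r - 2)).choose 2 : ℕ) := by exact_mod_cast hloc v
    rw [Nat.cast_sub hr] at h2
    push_cast at h2 h3 ⊢
    linarith
  have hexp : ∑ v : V, ((G.degree v : ℤ) - (r - 2)) * ((G.degree v : ℤ) - (r - 2) - 1)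
      = ∑ v : V, (G.degree v : ℤ) ^ 2 - (2 * r - 3) * ∑ v : V, (G.degree v : ℤ)
        + n * ((r - 1) * (r - 2)) := by
    rw [Finset.mul_sum, ← Finset.sum_sub_distrib, ← hcard]
    have : (Fintype.card V : ℤ) * (((r : ℤ) - 1) * (r - 2))
        = ∑ v : V, (((r : ℤ) - 1) * (r - 2)) := by simp
    rw [this, ← Finset.sum_add_distrib]
    apply Finset.sum_congr rfl
    intro v _
    ring
  have hm : 2 * (E.card : ℤ) ≤ ((n : ℤ) - (r - 1)) * ((n : ℤ) - (r - 1) - 1) := by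
    have h2 := two_choose_le n (r - 1)
    have h3 : (E.card : ℤ) ≤ ((n - (r - 1)).choose 2 : ℕ) := by exact_mod_cast hglob
    rw [Nat.cast_sub (by omega : 1 ≤ r)] at h2
    push_cast at h2 h3 ⊢
    linarith
  rw [hexp, hdegsum] at hsum
  have hr2 : (0 : ℤ) ≤ (r : ℤ) - 2 := by
    have : (2 : ℤ) ≤ r := by exact_mod_cast hr
    linarith
  have hmul := mul_le_mul_of_nonneg_left hm hr2
  nlinarith [hmul, hsum]
end

section
/- Let r and n be integers with r ≥ 3 and n ≥ r+1, and let G be a K_{r+1}-saturated simple graph on n vertices such that the sum over all vertices v of d(v)² equals (n-1)²(r-1) + (r-1)²(n-r+1), where d(v) denotes the degree of v. Then G is isomorphic to S_{n,r}. -/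
open SimpleGraph

/-- The graph `S_{n,r}`: a complete graph on the `r-1` vertices `{0, …, r-2}` of `Fin n`,
together with `n-r+1` further vertices each adjacent exactly to those `r-1` vertices;
i.e. two distinct vertices are adjacent iff at least one of them lies in `{0, …, r-2}`. -/
def Snr (n r : ℕ) : SimpleGraph (Fin n) :=
  SimpleGraph.fromRel (fun u v => (u : ℕ) < r - 1 ∨ (v : ℕ) < r - 1)

section aux

open Finset

variable {W : Type*} [Fintype W] [DecidableEq W] (G : SimpleGraph W) [DecidableRel G.Adj]

/-- Hall's condition. -/
theorem hall_cond (a : ℕ)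
    (hfree : ∀ s : Finset W, G.IsClique (s : Set W) → s.card ≤ a + 1)
    (hsat : ∀ u v, u ≠ v → ¬ G.Adj u v → ∃ C : Finset W, G.IsClique (C : Set W) ∧ C.card = a ∧
      ∀ x ∈ C, G.Adj u x ∧ G.Adj v x)
    (hnd : ∀ v, ∃ u, u ≠ v ∧ ¬ G.Adj v u) (v : W) (A : Finset W)
    (hA : G.IsClique (A : Set W)) (hAv : ∀ x ∈ A, G.Adj v x) :
    A.card ≤ (univ.filter fun w => G.Adj v w ∧ ∃ x ∈ A, w ≠ x ∧ ¬ G.Adj x w).card := by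
  induction A using Finset.strongInduction with
  | H A ih =>
    rcases A.eq_empty_or_nonempty with rfl | hne
    · simp
    obtain ⟨T, hT, hTc, ⟨x, hxA, hxT⟩, hTv⟩ : ∃ T : Finset W, G.IsClique (T : Set W) ∧
        T.card = a + 1 ∧ (∃ x ∈ A, x ∉ T) ∧
        ∀ w ∈ T, (∃ x ∈ A, w ≠ x ∧ ¬ G.Adj x w) → G.Adj v w := by
      by_cases h1 : ∃ x ∈ A, ∃ y, y ≠ v ∧ ¬ G.Adj v y ∧ ¬ G.Adj x y
      · obtain ⟨x, hx, y, hyv, hvy, hxy⟩ := h1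
        obtain ⟨C, hC, hCc, hCa⟩ := hsat v y hyv.symm hvy
        have hvC : v ∉ C := fun h => G.irrefl (hCa v h).1
        refine ⟨insert v C, ?_, ?_, ⟨x, hx, ?_⟩, ?_⟩
        · rw [Finset.coe_insert]
          exact hC.insert fun b hb _ => (hCa b hb).1
        · rw [card_insert_of_notMem hvC, hCc]
        · rw [mem_insert, not_or]
          refine ⟨fun h => ?_, fun h => hxy ((hCa x h).2.symm)⟩
          subst h
          exact G.irrefl (hAv _ hx)
        · rintro w hw ⟨z, hz, hwz, hzw⟩
          rcases mem_insert.1 hw with rfl | hw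
          · exact absurd (hAv z hz).symm hzw
          · exact (hCa w hw).1
      · push Not at h1
        obtain ⟨x, hx⟩ := hne
        obtain ⟨z, hzx, hxz⟩ := hnd x
        obtain ⟨C, hC, hCc, hCa⟩ := hsat x z hzx.symm hxz
        have hzC : z ∉ C := fun h => G.irrefl (hCa z h).2
        refine ⟨insert z C, ?_, ?_, ⟨x, hx, ?_⟩, ?_⟩
        · rw [Finset.coe_insert]
          exact hC.insert fun b hb _ => (hCa b hb).2
        · rw [card_insert_of_notMem hzC, hCc]
        · rw [mem_insert, not_or]
          exact ⟨hzx.symm, fun h => G.irrefl (hCa x h).1⟩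
        · rintro w hw ⟨y, hy, hwy, hyw⟩
          by_contra hvw
          by_cases hwv : w = v
          · subst hwv
            exact hyw (hAv y hy).symm
          · exact hyw (h1 y hy w hwv hvw)
    have hlt : A ∩ T ⊂ A := by
      refine ⟨inter_subset_left, fun h => hxT (mem_inter.1 (h hxA)).2⟩
    have ih' := ih (A ∩ T) hlt (hA.subset (by simp))
      (fun x hx => hAv x (mem_inter.1 hx).1)
    -- the exchange clique
    set R := T.filter fun w => ∃ x ∈ A \ T, w ≠ x ∧ ¬ G.Adj x w with hR
    have hcl : G.IsClique (((T \ R) ∪ (A \ T) : Finset W) : Set W) := by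
      intro p hp q hq hpq
      simp only [coe_union, Set.mem_union, mem_coe, mem_sdiff, hR, mem_filter, not_and,
        not_exists] at hp hq
      rcases hp with ⟨hp, hp'⟩ | hp <;> rcases hq with ⟨hq, hq'⟩ | hq
      · exact hT hp hq hpq
      · have := hp' hp q hq hpq
        exact (not_not.1 this).symm
      · have := hq' hq p hp (Ne.symm hpq)
        exact (not_not.1 this)
      · exact hA hp.1 hq.1 hpq
    have hc := hfree _ hcl
    rw [card_union_of_disjoint (by
      rw [Finset.disjoint_left]
      intro w hw hw'
      exact (mem_sdiff.1 hw').2 (mem_sdiff.1 hw).1)] at hc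
    have h2 : (T \ R).card + R.card = T.card := card_sdiff_add_card_eq_card (filter_subset _ _)
    have h3 : (A \ T).card + (A ∩ T).card = A.card := card_sdiff_add_card_inter A T
    have h4 : (univ.filter fun w => G.Adj v w ∧ ∃ x ∈ A ∩ T, w ≠ x ∧ ¬ G.Adj x w).card + R.card
        ≤ (univ.filter fun w => G.Adj v w ∧ ∃ x ∈ A, w ≠ x ∧ ¬ G.Adj x w).card := by
      rw [← card_union_of_disjoint]
      · apply card_le_card
        intro w hw
        simp only [mem_union, mem_filter, mem_univ, true_and, hR, mem_inter, mem_sdiff] at hw ⊢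
        rcases hw with ⟨h, x, hx, hx'⟩ | ⟨h, x, hx, hx'⟩
        · exact ⟨h, x, hx.1, hx'⟩
        · exact ⟨hTv w h ⟨x, hx.1, hx'⟩, x, hx.1, hx'⟩
      · rw [Finset.disjoint_left]
        intro w hw hw'
        simp only [mem_filter, mem_univ, true_and, hR, mem_inter] at hw hw'
        obtain ⟨_, x, hx, hwx, hxw⟩ := hw
        exact hxw (hT hx.2 hw'.1 hwx.symm)
    omega

theorem matching (a : ℕ)
    (hfree : ∀ s : Finset W, G.IsClique (s : Set W) → s.card ≤ a + 1)
    (hsat : ∀ u v, u ≠ v → ¬ G.Adj u v → ∃ C : Finset W, G.IsClique (C : Set W) ∧ C.card = a ∧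
      ∀ x ∈ C, G.Adj u x ∧ G.Adj v x)
    (hnd : ∀ v, ∃ u, u ≠ v ∧ ¬ G.Adj v u) (v : W) :
    ∃ C : Finset W, G.IsClique (C : Set W) ∧ C.card = a ∧ (∀ x ∈ C, G.Adj v x) ∧
      ∃ f : W → W, Set.InjOn f C ∧ ∀ c ∈ C, G.Adj v (f c) ∧ f c ≠ c ∧ ¬ G.Adj c (f c) := by
  obtain ⟨y, hyv, hvy⟩ := hnd v
  obtain ⟨C, hC, hCc, hCa⟩ := hsat v y hyv.symm hvy
  refine ⟨C, hC, hCc, fun x hx => (hCa x hx).1, ?_⟩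
  have := (Finset.all_card_le_biUnion_card_iff_exists_injective
    (fun c : C => univ.filter fun w => G.Adj v w ∧ w ≠ c ∧ ¬ G.Adj c w)).1 (by
      intro s
      have h := hall_cond G a hfree hsat hnd v (s.map (Function.Embedding.subtype _))
        (hC.subset (by intro x; simp; tauto))
        (by
          intro x hx
          simp at hx
          exact (hCa x hx.1).1)
      rw [card_map] at h
      refine h.trans (card_le_card ?_)
      intro w hw
      simp only [mem_filter, mem_univ, true_and, mem_map, mem_biUnion] at hw ⊢
      obtain ⟨h1, x, ⟨c, hc, rfl⟩, h3⟩ := hw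
      exact ⟨c, hc, h1, h3⟩)
  obtain ⟨f, hf, hf'⟩ := this
  refine ⟨fun w => if h : w ∈ C then f ⟨w, h⟩ else w, ?_, ?_⟩
  · intro p hp q hq hpq
    have hp' : p ∈ C := hp
    have hq' : q ∈ C := hq
    simp only [hp', hq', dif_pos] at hpq
    simpa using hf hpq
  · intro c hc
    simp only [hc, dif_pos]
    simpa using hf' ⟨c, hc⟩

theorem min_degree (a : ℕ)
    (hfree : ∀ s : Finset W, G.IsClique (s : Set W) → s.card ≤ a + 1)
    (hsat : ∀ u v, u ≠ v → ¬ G.Adj u v → ∃ C : Finset W, G.IsClique (C : Set W) ∧ C.card = a ∧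
      ∀ x ∈ C, G.Adj u x ∧ G.Adj v x)
    (hnd : ∀ v, ∃ u, u ≠ v ∧ ¬ G.Adj v u) (v : W) : 2 * a ≤ G.degree v := by
  obtain ⟨C, hC, hCc, hCv, f, hf, hf'⟩ := matching G a hfree hsat hnd v
  rw [← G.card_neighborFinset_eq_degree]
  have h1 : (C ∪ C.image f).card = 2 * a := by
    rw [card_union_of_disjoint, card_image_of_injOn hf]
    · omega
    · rw [Finset.disjoint_left]
      intro w hw hw'
      obtain ⟨c, hc, rfl⟩ := mem_image.1 hw'
      exact (hf' c hc).2.2 (hC hc hw (hf' c hc).2.1.symm)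
  rw [← h1]
  apply card_le_card
  intro w hw
  rw [G.mem_neighborFinset]
  rcases mem_union.1 hw with hw | hw
  · exact hCv w hw
  · obtain ⟨c, hc, rfl⟩ := mem_image.1 hw
    exact (hf' c hc).1

theorem sum_degree_finset (Q : Finset W) :
    ∑ w ∈ Q, G.degree w = ∑ x, (Q.filter fun w => G.Adj x w).card := by
  have := Finset.sum_card_bipartiteAbove_eq_sum_card_bipartiteBelow (s := Q) (t := univ)
    (fun w x => G.Adj x w)
  simp only [bipartiteAbove, bipartiteBelow] at this
  rw [← this]
  refine sum_congr rfl fun w _ => ?_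
  rw [← G.card_neighborFinset_eq_degree]
  congr 1
  ext x
  simp [G.adj_comm]

theorem clique_pairs (C : Finset W) (hC : G.IsClique (C : Set W)) (f : W → W)
    (hf : Set.InjOn f C) (hf' : ∀ c ∈ C, f c ≠ c ∧ ¬ G.Adj c (f c)) (M : Finset W)
    (K : Finset W) (hK : G.IsClique (K : Set W)) (hKM : K ⊆ M) :
    K.card + (C.filter fun c => c ∈ M ∧ f c ∈ M).card ≤ M.card := by
  have h : (C.filter fun c => c ∈ M ∧ f c ∈ M).card ≤ (M \ K).card := by
    apply card_le_card_of_injOn (fun c => if c ∈ K then f c else c)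
    · intro c hc
      simp only [coe_filter, Set.mem_ofPred_eq] at hc
      simp only [coe_sdiff, Set.mem_sdiff, mem_coe]
      by_cases h : c ∈ K
      · simp only [h, if_true]
        refine ⟨hc.2.2, fun h' => (hf' c hc.1).2 (hK h h' (hf' c hc.1).1.symm)⟩
      · simp only [h, if_false]
        exact ⟨hc.2.1, not_false⟩
    · have hne : ∀ c ∈ C, f c ∉ C := fun c hc h => (hf' c hc).2 (hC hc h (hf' c hc).1.symm)
      intro p hp q hq hpq
      simp only [coe_filter, Set.mem_ofPred_eq] at hp hq
      dsimp only at hpq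
      split_ifs at hpq
      · exact hf hp.1 hq.1 hpq
      · exact absurd (hpq ▸ hq.1) (hne p hp.1)
      · exact absurd (hpq ▸ hp.1) (hne q hq.1)
      · exact hpq
  have := card_sdiff_add_card_eq_card hKM
  omega

theorem local_sum (a : ℕ) (ha : 1 ≤ a)
    (hfree : ∀ s : Finset W, G.IsClique (s : Set W) → s.card ≤ a + 1)
    (hsat : ∀ u v, u ≠ v → ¬ G.Adj u v → ∃ C : Finset W, G.IsClique (C : Set W) ∧ C.card = a ∧
      ∀ x ∈ C, G.Adj u x ∧ G.Adj v x)
    (hnd : ∀ v, ∃ u, u ≠ v ∧ ¬ G.Adj v u) (v : W) :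
    a * (Fintype.card W - 1) + a * (a - 1) ≤ ∑ w ∈ G.neighborFinset v, G.degree w := by
  classical
  obtain ⟨C, hC, hCc, hCv, f, hf, hf'⟩ := matching G a hfree hsat hnd v
  set Q := (G.neighborFinset v).filter fun w => ∃ K : Finset W, G.IsClique (K : Set W) ∧
    K.card = a ∧ (∀ x ∈ K, G.Adj v x) ∧ w ∈ K with hQ
  have hQs : Q ⊆ G.neighborFinset v := filter_subset _ _
  have hKQ : ∀ K : Finset W, G.IsClique (K : Set W) → K.card = a → (∀ x ∈ K, G.Adj v x) →
      K ⊆ Q := by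
    intro K h1 h2 h3 x hx
    rw [hQ, mem_filter, G.mem_neighborFinset]
    exact ⟨h3 x hx, K, h1, h2, h3, hx⟩
  have hsplit := sum_sdiff (f := fun w => G.degree w) hQs
  have hrest : (G.neighborFinset v \ Q).card * (2 * a) ≤
      ∑ w ∈ G.neighborFinset v \ Q, G.degree w := by
    rw [← smul_eq_mul]
    exact card_nsmul_le_sum _ _ _ fun w _ => min_degree G a hfree hsat hnd w
  have hQd := sum_degree_finset G Q
  have hv : (Q.filter fun w => G.Adj v w) = Q := by
    apply filter_true_of_mem
    intro w hw
    simpa using hQs hw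
  rw [← add_sum_erase univ _ (mem_univ v), hv] at hQd
  -- pointwise bound
  set p : W → ℕ := fun x => (C.filter fun c => f c ∈ Q ∧ G.Adj x c ∧ G.Adj x (f c)).card with hp
  have hpt : ∀ x ∈ univ.erase v, a + p x ≤ (Q.filter fun w => G.Adj x w).card +
      ((if x ∈ G.neighborFinset v \ Q then a else 0) + (if x ∈ Q then 1 else 0)) := by
    intro x hx
    have hxv : x ≠ v := ne_of_mem_erase hx
    have key : ∀ K : Finset W, G.IsClique (K : Set W) → K ⊆ (Q.filter fun w => G.Adj x w) →
        K.card + p x ≤ (Q.filter fun w => G.Adj x w).card := by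
      intro K h1 h2
      have := clique_pairs G C hC f hf (fun c hc => (hf' c hc).2) _ K h1 h2
      refine le_trans (Nat.add_le_add_left (card_le_card ?_) _) this
      intro c hc
      simp only [mem_filter] at hc ⊢
      exact ⟨hc.1, ⟨hKQ C hC hCc hCv hc.1, hc.2.2.1⟩, hc.2.1, hc.2.2.2⟩
    by_cases hxQ : x ∈ Q
    · have hx2 := hxQ
      rw [hQ, mem_filter] at hx2
      obtain ⟨_, K, h1, h2, h3, h4⟩ := hx2
      have := key (K.erase x) (h1.subset (by simp)) (by
        intro w hw
        rw [mem_erase] at hw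
        exact mem_filter.2 ⟨hKQ K h1 h2 h3 hw.2, h1 h4 hw.2 hw.1.symm⟩)
      rw [card_erase_of_mem h4] at this
      simp only [hxQ, if_true]
      omega
    · by_cases hxN : G.Adj v x
      · have := key ∅ (by simp) (by simp)
        simp [hxQ, hxN]
        simp at this
        omega
      · obtain ⟨K, h1, h2, h3⟩ := hsat v x hxv.symm hxN
        have := key K h1 (by
          intro w hw
          exact mem_filter.2 ⟨hKQ K h1 h2 (fun y hy => (h3 y hy).1) hw, (h3 w hw).2⟩)
        omega
  have hsum := sum_le_sum hpt
  rw [sum_add_distrib, sum_add_distrib, sum_add_distrib, sum_const,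
    card_erase_of_mem (mem_univ v), card_univ, smul_eq_mul] at hsum
  have e1 : ∑ x ∈ univ.erase v, (if x ∈ G.neighborFinset v \ Q then a else 0) ≤
      (G.neighborFinset v \ Q).card * a := by
    rw [← sum_filter, sum_const, smul_eq_mul]
    apply Nat.mul_le_mul_right
    apply card_le_card
    intro x hx
    exact (mem_filter.1 hx).2
  have e2 : ∑ x ∈ univ.erase v, (if x ∈ Q then 1 else 0) ≤ Q.card := by
    rw [← sum_filter, sum_const, smul_eq_mul, mul_one]
    apply card_le_card
    intro x hx
    exact (mem_filter.1 hx).2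
  -- sum of p
  have e3 : (C.filter fun c => f c ∈ Q).card * (a - 1) ≤ ∑ x ∈ univ.erase v, p x := by
    have := Finset.sum_card_bipartiteAbove_eq_sum_card_bipartiteBelow
      (s := C.filter fun c => f c ∈ Q) (t := univ.erase v)
      (fun c x => G.Adj x c ∧ G.Adj x (f c))
    simp only [bipartiteAbove, bipartiteBelow, filter_filter] at this
    simp only [hp]
    rw [← this, ← smul_eq_mul]
    apply card_nsmul_le_sum
    intro c hc
    rw [mem_filter] at hc
    obtain ⟨D, h1, h2, h3⟩ := hsat c (f c) (hf' c hc.1).2.1.symm (hf' c hc.1).2.2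
    refine le_trans ?_ (card_le_card (s := D.erase v) ?_)
    · rw [← h2]; exact pred_card_le_card_erase
    · intro x hx
      rw [mem_erase] at hx
      simp only [mem_filter, mem_erase, mem_univ, and_true]
      exact ⟨hx.1, (h3 x hx.2).1.symm, (h3 x hx.2).2.symm⟩
  have e4 : a ≤ (C.filter fun c => f c ∈ Q).card + (G.neighborFinset v \ Q).card := by
    rw [← hCc, ← card_filter_add_card_filter_not (s := C) (fun c => f c ∈ Q)]
    apply Nat.add_le_add_left
    apply card_le_card_of_injOn f
    · intro c hc
      simp only [coe_filter, Set.mem_ofPred_eq] at hc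
      simp only [coe_sdiff, Set.mem_sdiff, mem_coe, G.mem_neighborFinset]
      exact ⟨(hf' c hc.1).1, hc.2⟩
    · exact hf.mono (by intro c; simp; tauto)
  have e5 : a * (a - 1) ≤ (C.filter fun c => f c ∈ Q).card * (a - 1) +
      (G.neighborFinset v \ Q).card * a := by
    calc a * (a - 1) ≤ ((C.filter fun c => f c ∈ Q).card + (G.neighborFinset v \ Q).card) * (a - 1)
          := Nat.mul_le_mul_right _ e4
      _ = (C.filter fun c => f c ∈ Q).card * (a - 1) + (G.neighborFinset v \ Q).card * (a - 1) := by
          ring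
      _ ≤ _ := by
          apply Nat.add_le_add_left
          exact Nat.mul_le_mul_left _ (Nat.sub_le _ _)
  have e6 : (G.neighborFinset v \ Q).card * (2 * a) = (G.neighborFinset v \ Q).card * a +
    (G.neighborFinset v \ Q).card * a := by ring
  have e7 : a * (Fintype.card W - 1) = (Fintype.card W - 1) * a := by ring
  omega

theorem sum_sq (a : ℕ) (ha : 1 ≤ a)
    (hfree : ∀ s : Finset W, G.IsClique (s : Set W) → s.card ≤ a + 1)
    (hsat : ∀ u v, u ≠ v → ¬ G.Adj u v → ∃ C : Finset W, G.IsClique (C : Set W) ∧ C.card = a ∧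
      ∀ x ∈ C, G.Adj u x ∧ G.Adj v x)
    (hnd : ∀ v, ∃ u, u ≠ v ∧ ¬ G.Adj v u) :
    Fintype.card W * (a * (Fintype.card W - 1) + a * (a - 1)) ≤ ∑ w, G.degree w ^ 2 := by
  have h : ∑ v, ∑ w ∈ G.neighborFinset v, G.degree w = ∑ w, G.degree w ^ 2 := by
    simp only [G.neighborFinset_eq_filter, sum_filter]
    rw [sum_comm]
    refine sum_congr rfl fun w _ => ?_
    rw [← sum_filter, sum_const, smul_eq_mul, sq]
    congr 1
    rw [← G.card_neighborFinset_eq_degree, G.neighborFinset_eq_filter]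
    congr 1
    ext x
    simp [G.adj_comm]
  rw [← h, ← card_univ, ← smul_eq_mul]
  exact card_nsmul_le_sum _ _ _ fun v _ => local_sum G a ha hfree hsat hnd v

end aux

section aux2

open Finset

variable {V : Type*} [Fintype V] [DecidableEq V] (G : SimpleGraph V) [DecidableRel G.Adj]

theorem sat_common (r : ℕ) (hsat : IsKSaturated (r + 1) G) (u v : V) (huv : u ≠ v)
    (hadj : ¬ G.Adj u v) : ∃ C : Finset V, G.IsClique (C : Set V) ∧ C.card = r - 1 ∧
      ∀ x ∈ C, G.Adj u x ∧ G.Adj v x := by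
  have h := hsat.2 u v huv hadj
  unfold CliqueFree at h
  push Not at h
  obtain ⟨s, hs⟩ := h
  have hA : ∀ p ∈ s, ∀ q ∈ s, p ≠ q → G.Adj p q ∨ (p = u ∧ q = v ∨ p = v ∧ q = u) := by
    intro p hp q hq hpq
    have := hs.isClique hp hq hpq
    simp only [sup_adj, fromEdgeSet_adj, Set.mem_singleton_iff, Sym2.eq_iff] at this
    tauto
  have hu : u ∈ s := by
    by_contra hu
    refine hsat.1 s ⟨fun p hp q hq hpq => ?_, hs.card_eq⟩
    rcases hA p hp q hq hpq with h | ⟨rfl, _⟩ | ⟨_, rfl⟩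
    · exact h
    · exact absurd hp hu
    · exact absurd hq hu
  have hv : v ∈ s := by
    by_contra hv
    refine hsat.1 s ⟨fun p hp q hq hpq => ?_, hs.card_eq⟩
    rcases hA p hp q hq hpq with h | ⟨_, rfl⟩ | ⟨rfl, _⟩
    · exact h
    · exact absurd hq hv
    · exact absurd hp hv
  refine ⟨(s.erase u).erase v, ?_, ?_, ?_⟩
  · intro p hp q hq hpq
    simp only [mem_coe, mem_erase] at hp hq
    rcases hA p hp.2.2 q hq.2.2 hpq with h | ⟨h, _⟩ | ⟨h, _⟩
    · exact h
    · exact absurd h hp.2.1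
    · exact absurd h hp.1
  · rw [card_erase_of_mem (mem_erase.2 ⟨huv.symm, hv⟩), card_erase_of_mem hu, hs.card_eq]
    omega
  · intro x hx
    simp only [mem_erase] at hx
    constructor
    · rcases hA u hu x hx.2.2 hx.2.1.symm with h | ⟨_, h⟩ | ⟨_, h⟩
      · exact h
      · exact absurd h hx.1
      · exact absurd h hx.2.1
    · rcases hA v hv x hx.2.2 hx.1.symm with h | ⟨_, h⟩ | ⟨_, h⟩
      · exact h
      · exact absurd h hx.1
      · exact absurd h hx.2.1

theorem iso_of_struct (n r : ℕ) (hcard : Fintype.card V = n) (U : Finset V)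
    (hU : U.card = r - 1) (hn : r - 1 ≤ n)
    (hadj : ∀ u v, G.Adj u v ↔ u ≠ v ∧ (u ∈ U ∨ v ∈ U)) : Nonempty (G ≃g Snr n r) := by
  classical
  let e0 : V ≃ Fin n := Fintype.equivFinOfCardEq hcard
  have hc : Fintype.card {i : Fin n // e0.symm i ∈ U} =
      Fintype.card {i : Fin n // (i : ℕ) < r - 1} := by
    have h1 : Fintype.card {i : Fin n // e0.symm i ∈ U} = Fintype.card {v // v ∈ U} :=
      Fintype.card_congr (e0.symm.subtypeEquiv (by simp))
    have h2 : Fintype.card {i : Fin n // (i : ℕ) < r - 1} = Fintype.card (Fin (r - 1)) :=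
      Fintype.card_congr
        ⟨fun i => ⟨i.1, i.2⟩, fun i => ⟨⟨i.1, by omega⟩, i.2⟩, fun _ => rfl, fun _ => rfl⟩
    rw [h1, h2]
    simp [hU]
  let e1 := (Fintype.equivOfCardEq hc).extendSubtype
  have he : ∀ v, ((e1 (e0 v) : Fin n) : ℕ) < r - 1 ↔ v ∈ U := by
    intro v
    constructor
    · intro h
      by_contra hv
      exact (Fintype.equivOfCardEq hc).extendSubtype_not_mem (e0 v) (by simpa using hv) h
    · intro h
      exact (Fintype.equivOfCardEq hc).extendSubtype_mem (e0 v) (by simpa using h)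
  refine ⟨⟨e0.trans e1, ?_⟩⟩
  intro u v
  simp only [Snr, fromRel_adj, Equiv.trans_apply, he, hadj, ne_eq, EmbeddingLike.apply_eq_iff_eq]
  tauto

theorem arith (a k m : ℤ) (ha : 1 ≤ a) (hk : 0 ≤ k) (hak : 2 ≤ a + k) (S1 S2 : ℤ)
    (h1 : m * (2 * a) ≤ S1) (h2 : m * (a * (m - 1) + a * (a - 1)) ≤ S2)
    (heq : k * (m + k - 1) ^ 2 + (S2 + 2 * k * S1 + m * k ^ 2)
      = ((m + k) - 1) ^ 2 * (a + k) + (a + k) ^ 2 * (m - a)) : False := by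
  have h3 : k * (m * (2 * a)) ≤ k * S1 := mul_le_mul_of_nonneg_left h1 hk
  have h4 : 0 < a * (a ^ 2 + 2 * a * k + 2 * k - 1) := by
    apply mul_pos (by linarith)
    rcases lt_or_ge 1 a with h | h
    · nlinarith [mul_nonneg (by linarith : (0:ℤ) ≤ a) hk]
    · have : a = 1 := by linarith
      subst this
      linarith
  nlinarith

end aux2

theorem stmt_1 {V : Type*} [Fintype V] [DecidableEq V] (r n : ℕ) (hr : 3 ≤ r)
    (hn : r + 1 ≤ n) (hcard : Fintype.card V = n)
    (G : SimpleGraph V) [DecidableRel G.Adj] (hsat : IsKSaturated (r + 1) G)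
    (heq : ∑ v : V, (G.degree v : ℤ) ^ 2
      = ((n : ℤ) - 1) ^ 2 * ((r : ℤ) - 1) + ((r : ℤ) - 1) ^ 2 * ((n : ℤ) - (r : ℤ) + 1)) :
    Nonempty (G ≃g Snr n r) := by
  classical
  have hfree : ∀ s : Finset V, G.IsClique (s : Set V) → s.card ≤ r := by
    intro s hs
    by_contra h
    obtain ⟨t, hts, htc⟩ := Finset.exists_subset_card_eq (show r + 1 ≤ s.card by omega)
    exact hsat.1 t ⟨hs.subset (by exact_mod_cast hts), htc⟩
  have hcom := sat_common G r hsat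
  set U : Finset V := Finset.univ.filter fun u => ∀ w, w ≠ u → G.Adj u w with hUdef
  have hU : ∀ u, u ∈ U ↔ ∀ w, w ≠ u → G.Adj u w := by simp [hUdef]
  have hUcl : ∀ K : Finset V, G.IsClique (K : Set V) → G.IsClique ((U ∪ K : Finset V) : Set V) := by
    intro K hK p hp q hq hpq
    simp only [Finset.coe_union, Set.mem_union, Finset.mem_coe] at hp hq
    rcases hp with hp | hp
    · exact (hU p).1 hp q hpq.symm
    rcases hq with hq | hq
    · exact ((hU q).1 hq p hpq).symm
    exact hK hp hq hpq
  have hUK : ∀ K : Finset V, G.IsClique (K : Set V) → (∀ x ∈ K, x ∉ U) → U.card + K.card ≤ r := by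
    intro K hK hKU
    rw [← Finset.card_union_of_disjoint]
    · exact hfree _ (hUcl K hK)
    · rw [Finset.disjoint_right]; exact hKU
  have hk : U.card + 1 ≤ r := by
    have h0 := hUK ∅ (by simp) (by simp)
    have : ∃ w, w ∉ U := by
      by_contra h
      push Not at h
      have : U = Finset.univ := Finset.eq_univ_iff_forall.2 h
      rw [this, Finset.card_univ] at h0
      simp at h0
      omega
    obtain ⟨w, hw⟩ := this
    simpa using hUK {w} (by simp) (by simpa using hw)
  obtain ⟨a, ha⟩ : ∃ a, r = a + 1 + U.card := ⟨r - 1 - U.card, by omega⟩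
  rcases Nat.eq_zero_or_pos a with ha0 | hapos
  · apply iso_of_struct G n r hcard U (by omega) (by omega)
    intro u v
    constructor
    · intro h
      refine ⟨h.ne, ?_⟩
      by_contra hno
      push Not at hno
      have := hUK {u, v} (by
        rw [Finset.coe_pair, isClique_pair]
        exact fun _ => h) (by
        intro x hx
        rcases Finset.mem_insert.1 hx with rfl | hx
        · exact hno.1
        · rw [Finset.mem_singleton.1 hx]; exact hno.2)
      rw [Finset.card_pair h.ne] at this
      omega
    · rintro ⟨hne, h | h⟩
      · exact (hU u).1 h v hne.symm
      · exact ((hU v).1 h u hne).symm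
  exfalso
  let H : SimpleGraph {v : V // v ∉ U} := G.comap Subtype.val
  have hHadj : ∀ x y, H.Adj x y ↔ G.Adj x.1 y.1 := fun x y => Iff.rfl
  have Hfree : ∀ s : Finset {v : V // v ∉ U}, H.IsClique (s : Set _) → s.card ≤ a + 1 := by
    intro s hs
    have := hUK (s.map (Function.Embedding.subtype _)) (by
      intro p hp q hq hpq
      simp only [Finset.coe_map, Set.mem_image, Finset.mem_coe] at hp hq
      obtain ⟨p, hp, rfl⟩ := hp
      obtain ⟨q, hq, rfl⟩ := hq
      exact hs hp hq (fun h => hpq (by rw [h]))) (by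
      intro x hx
      obtain ⟨y, _, rfl⟩ := Finset.mem_map.1 hx
      exact y.2)
    rw [Finset.card_map] at this
    omega
  have Hsat : ∀ u v, u ≠ v → ¬ H.Adj u v → ∃ C : Finset {v : V // v ∉ U},
      H.IsClique (C : Set _) ∧ C.card = a ∧ ∀ x ∈ C, H.Adj u x ∧ H.Adj v x := by
    intro u v huv hadj
    obtain ⟨C, hC, hCc, hCa⟩ := hcom u.1 v.1 (fun h => huv (Subtype.ext h)) hadj
    have h1 : a ≤ (C.subtype (fun v => v ∉ U)).card := by
      rw [Finset.card_subtype]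
      have h2 := Finset.card_filter_add_card_filter_not (s := C) (fun v => v ∈ U)
      have h3 : (C.filter fun v => v ∈ U).card ≤ U.card :=
        Finset.card_le_card fun x hx => (Finset.mem_filter.1 hx).2
      omega
    obtain ⟨t, hts, htc⟩ := Finset.exists_subset_card_eq h1
    have hmem : ∀ x ∈ t, x.1 ∈ C := fun x hx => Finset.mem_subtype.1 (hts hx)
    refine ⟨t, fun p hp q hq hpq => ?_, htc, fun x hx => hCa x.1 (hmem x hx)⟩
    exact hC (hmem p hp) (hmem q hq) (fun h => hpq (Subtype.ext h))
  have Hnd : ∀ v, ∃ u, u ≠ v ∧ ¬ H.Adj v u := by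
    intro v
    have h := v.2
    rw [hU] at h
    push Not at h
    obtain ⟨w, hw, hvw⟩ := h
    have hwU : w ∉ U := fun h => hvw ((hU w).1 h v.1 hw.symm).symm
    exact ⟨⟨w, hwU⟩, fun h => hw (congrArg Subtype.val h), hvw⟩
  have hdeg : ∀ v : {v : V // v ∉ U}, G.degree v.1 = H.degree v + U.card := by
    intro v
    rw [← G.card_neighborFinset_eq_degree, ← H.card_neighborFinset_eq_degree,
      ← Finset.card_map (Function.Embedding.subtype _), ← Finset.card_union_of_disjoint]
    · congr 1
      ext x
      simp only [G.mem_neighborFinset, Finset.mem_union, Finset.mem_map, H.mem_neighborFinset]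
      constructor
      · intro h
        by_cases hx : x ∈ U
        · exact Or.inr hx
        · exact Or.inl ⟨⟨x, hx⟩, h, rfl⟩
      · rintro (⟨y, hy, rfl⟩ | hx)
        · exact hy
        · exact ((hU x).1 hx v.1 (fun h => v.2 (h ▸ hx))).symm
    · rw [Finset.disjoint_left]
      intro x hx
      obtain ⟨y, _, rfl⟩ := Finset.mem_map.1 hx
      exact y.2
  have hdegU : ∀ u ∈ U, G.degree u = n - 1 := by
    intro u hu
    rw [← G.card_neighborFinset_eq_degree, ← hcard, ← Finset.card_univ,
      ← Finset.card_erase_of_mem (Finset.mem_univ u)]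
    congr 1
    ext x
    simp only [G.mem_neighborFinset, Finset.mem_erase, Finset.mem_univ, and_true]
    exact ⟨fun h => h.ne.symm, fun h => (hU u).1 hu x h⟩
  have hcW : Fintype.card {v : V // v ∉ U} + U.card = n := by
    have h := Fintype.card_subtype_compl (fun v => v ∈ U)
    have h' := Finset.card_le_univ U
    rw [Fintype.card_coe] at h
    omega
  set m := Fintype.card {v : V // v ∉ U} with hm
  have hS1 : m * (2 * a) ≤ ∑ v, H.degree v := by
    rw [hm, ← Finset.card_univ, ← smul_eq_mul]
    exact Finset.card_nsmul_le_sum _ _ _ fun v _ => min_degree H a Hfree Hsat Hnd v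
  have hS2 := sum_sq H a hapos Hfree Hsat Hnd
  have hsplit : ∑ v : V, (G.degree v : ℤ) ^ 2 =
      (U.card : ℤ) * ((m : ℤ) + U.card - 1) ^ 2 + ((∑ v, (H.degree v : ℤ) ^ 2) +
        2 * (U.card : ℤ) * (∑ v, (H.degree v : ℤ)) + (m : ℤ) * (U.card : ℤ) ^ 2) := by
    rw [← Finset.sum_add_sum_compl U]
    congr 1
    · rw [Finset.sum_congr rfl (g := fun _ => ((m : ℤ) + U.card - 1) ^ 2)]
      · rw [Finset.sum_const, nsmul_eq_mul]
      · intro u hu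
        rw [hdegU u hu]
        have : ((n - 1 : ℕ) : ℤ) = (m : ℤ) + U.card - 1 := by omega
        rw [this]
    · rw [Finset.sum_subtype (p := fun v => v ∉ U) Uᶜ (by simp)]
      simp only [hdeg, Nat.cast_add, add_sq, Finset.sum_add_distrib, Finset.sum_const,
        Finset.card_univ, nsmul_eq_mul, Finset.mul_sum, Finset.sum_mul, ← hm]
      congr 2
      refine Finset.sum_congr rfl fun v _ => by ring
  have hm1 : 1 ≤ m := by omega
  rw [heq] at hsplit
  rw [← hm] at hS2
  refine arith a U.card m (by exact_mod_cast hapos) (by positivity) (by omega)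
    (∑ v, (H.degree v : ℤ)) (∑ v, (H.degree v : ℤ) ^ 2) (by exact_mod_cast hS1) ?_ ?_
  · zify [hm1, hapos] at hS2
    exact hS2
  · rw [← hsplit]
    have h1 : (n : ℤ) = m + U.card := by omega
    have h2 : (r : ℤ) = a + 1 + U.card := by omega
    rw [h1, h2]
    ring
end

section
/- Let n ≥ 3 be an integer and let G be a K_3-saturated simple graph on n vertices such that the sum over all vertices v of d(v)² equals (n-1)² + (n-1), where d(v) denotes the degree of v. Then either G is isomorphic to the star S_{n,2} (one center adjacent to all n-1 other vertices, which form an independent set), or G has diameter 2 and girth 5 (i.e., G is a Moore graph of diameter 2). -/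
open SimpleGraph

theorem sat_no_triangle {V : Type*} {G : SimpleGraph V} (h : IsKSaturated 3 G)
    {a b c : V} (hab : G.Adj a b) (hbc : G.Adj b c) (hca : G.Adj c a) : False := by
  classical
  exact h.1 {a, b, c} (is3Clique_triple_iff.2 ⟨hab, hca.symm, hbc⟩)

theorem sat_common_s2 {V : Type*} {G : SimpleGraph V} (h : IsKSaturated 3 G)
    {u v : V} (huv : u ≠ v) (hn : ¬ G.Adj u v) : ∃ w, G.Adj w u ∧ G.Adj w v := by
  classical
  have h2 := h.2 u v huv hn
  unfold CliqueFree at h2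
  push Not at h2
  obtain ⟨t, ht⟩ := h2
  obtain ⟨a, b, c, hab, hac, hbc, -⟩ := is3Clique_iff.1 ht
  simp only [sup_adj, fromEdgeSet_adj, Set.mem_singleton_iff, Sym2.eq_iff] at hab hac hbc
  have key : ∀ {a b c : V}, G.Adj a b → G.Adj b c → G.Adj c a → False :=
    fun h1 h2 h3 => sat_no_triangle h h1 h2 h3
  by_contra! hcon
  have hs : ∀ x y, G.Adj x y → G.Adj y x := fun x y h => h.symm
  grind

theorem sat_unique {V : Type*} [Fintype V] [DecidableEq V]
    {G : SimpleGraph V} [DecidableRel G.Adj] (hsat : IsKSaturated 3 G)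
    (heq : ∑ v : V, (G.degree v : ℤ) ^ 2 =
      ((Fintype.card V : ℤ) - 1) ^ 2 + ((Fintype.card V : ℤ) - 1))
    {u v : V} (huv : u ≠ v) (hn : ¬ G.Adj u v) {x y : V} (hxu : G.Adj x u) (hxv : G.Adj x v)
    (hyu : G.Adj y u) (hyv : G.Adj y v) : x = y := by
  let a : V → V → ℤ := fun p q => if G.Adj p q then 1 else 0
  let c : V → V → ℤ := fun p q => ∑ w, a w p * a w q
  let e : V → V → ℤ := fun p q => if p = q then (G.degree p : ℤ) else 1
  have ha0 : ∀ p q, 0 ≤ a p q := by intro p q; simp only [a]; split_ifs <;> simp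
  have hrow : ∀ p, ∑ q, a p q = (G.degree p : ℤ) := by
    intro p
    simp only [a, Finset.sum_boole, ← card_neighborFinset_eq_degree, neighborFinset_eq_filter]
  have hterm : ∀ p q w, 0 ≤ a w p * a w q := fun p q w => mul_nonneg (ha0 _ _) (ha0 _ _)
  have hnn : ∀ p q, 0 ≤ c p q + a p q - e p q := by
    intro p q
    have hc0 : 0 ≤ c p q := Finset.sum_nonneg fun w _ => hterm p q w
    by_cases hpq : p = q
    · subst hpq
      have : c p p = G.degree p := by
        rw [← hrow p]
        refine Finset.sum_congr rfl fun w _ => ?_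
        simp only [a, G.adj_comm w p]
        split_ifs <;> simp
      simp [this, a, e]
    · by_cases hadj : G.Adj p q
      · simp [a, e, hpq, hadj, hc0]
      · obtain ⟨w, h1, h2⟩ := sat_common_s2 hsat hpq hadj
        have : a w p * a w q ≤ c p q :=
          Finset.single_le_sum (f := fun w => a w p * a w q) (fun w _ => hterm p q w)
            (Finset.mem_univ w)
        simp only [a, h1, h2, if_true, mul_one] at this
        simp only [a, e, hpq, hadj, if_false]
        linarith
  have hcsum : ∑ p, ∑ q, c p q = ∑ w, (G.degree w : ℤ) ^ 2 := by
    have h1 : ∀ w, (G.degree w : ℤ) ^ 2 = ∑ p, ∑ q, a w p * a w q := by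
      intro w
      rw [← hrow w, sq, Finset.sum_mul_sum]
    simp only [h1, c]
    rw [Finset.sum_comm' (t' := Finset.univ) (s' := fun _ => Finset.univ) (by simp)]
    conv_rhs => rw [Finset.sum_comm]
    rw [Finset.sum_comm]
    refine Finset.sum_congr rfl fun p _ => ?_
    rw [Finset.sum_comm]
  have hesum : ∀ p, ∑ q, e p q = (G.degree p : ℤ) + ((Fintype.card V : ℤ) - 1) := by
    intro p
    have : ∀ q, e p q = 1 + if p = q then (G.degree p : ℤ) - 1 else 0 := by
      intro q; simp only [e]; split_ifs <;> ring
    simp only [this, Finset.sum_add_distrib, Finset.sum_ite_eq, Finset.mem_univ, if_true]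
    simp
    ring
  have htot : ∑ p, ∑ q, (c p q + a p q - e p q) = 0 := by
    simp only [Finset.sum_add_distrib, Finset.sum_sub_distrib, hcsum, hrow, hesum, heq]
    simp
    ring
  have hz1 := (Finset.sum_eq_zero_iff_of_nonneg
    (fun p _ => Finset.sum_nonneg fun q _ => hnn p q)).1 htot u (Finset.mem_univ u)
  have hz := (Finset.sum_eq_zero_iff_of_nonneg (fun q _ => hnn u q)).1 hz1 v (Finset.mem_univ v)
  by_contra hxy
  have h2 : ∑ w ∈ ({x, y} : Finset V), a w u * a w v ≤ c u v :=
    Finset.sum_le_sum_of_subset_of_nonneg (Finset.subset_univ _) fun w _ _ => hterm u v w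
  rw [Finset.sum_pair hxy] at h2
  simp only [a, e, huv, hn, hxu, hxv, hyu, hyv, if_true, if_false] at h2 hz
  linarith

theorem star_iso {V : Type*} [Fintype V] [DecidableEq V] (n : ℕ) (hn : 3 ≤ n)
    (hcard : Fintype.card V = n) (G : SimpleGraph V) (hsat : IsKSaturated 3 G)
    (w : V) (hw : ∀ x, x ≠ w → G.Adj w x) : Nonempty (G ≃g Snr n 2) := by
  have hadj : ∀ a b, G.Adj a b ↔ a ≠ b ∧ (a = w ∨ b = w) := by
    intro a b
    constructor
    · intro h
      refine ⟨h.ne, ?_⟩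
      by_contra! hc
      exact sat_no_triangle hsat (hw a hc.1) h (hw b hc.2).symm
    · rintro ⟨hne, rfl | rfl⟩
      · exact hw b hne.symm
      · exact (hw a hne).symm
  let z : Fin n := ⟨0, by omega⟩
  let f0 : V ≃ Fin n := Fintype.equivFinOfCardEq hcard
  let f : V ≃ Fin n := f0.trans (Equiv.swap (f0 w) z)
  have hf : f w = z := by simp [f]
  have hfz : ∀ a, ((f a : ℕ) < 2 - 1 ↔ a = w) := by
    intro a
    rw [← f.injective.eq_iff, hf, Fin.ext_iff]
    simp [z]
  refine ⟨⟨f, ?_⟩⟩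
  intro a b
  simp only [Snr, fromRel_adj, hfz, hadj, ne_eq, f.injective.eq_iff]
  tauto

theorem girth_five {V : Type*} {G : SimpleGraph V}
    (htri : ∀ a b c, G.Adj a b → G.Adj b c → G.Adj c a → False)
    (huniq : ∀ u v x y, u ≠ v → G.Adj x u → G.Adj x v → G.Adj y u → G.Adj y v → x = y)
    {a b c d e : V} (hab : G.Adj a b) (hbc : G.Adj b c) (hcd : G.Adj c d) (hde : G.Adj d e)
    (hea : G.Adj e a) (hac : a ≠ c) (had : a ≠ d) (hbd : b ≠ d) (hbe : b ≠ e) (hce : c ≠ e) :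
    G.girth = 5 := by
  have hcyc : (Walk.cons hab <| .cons hbc <| .cons hcd <| .cons hde <| .cons hea .nil).IsCycle := by
    have h1 := hab.ne
    have h2 := hbc.ne
    have h3 := hcd.ne
    have h4 := hde.ne
    have h5 := hea.ne
    rw [Walk.cons_isCycle_iff]
    simp [Walk.cons_isPath_iff]
    grind
  have hge : 5 ≤ G.egirth := by
    rw [le_egirth]
    intro x w hw
    have h3 := hw.three_le_length
    by_contra! hlt
    have hlt' : w.length < 5 := by exact_mod_cast hlt
    match w, hw, h3, hlt' with
    | .cons p (.cons q (.cons r .nil)), hw, _, _ => exact htri _ _ _ p q r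
    | .cons (v := x1) p (.cons (v := x2) q (.cons (v := x3) r (.cons s .nil))), hw, _, _ =>
      have h1 := hw.support_nodup
      simp at h1
      have := huniq x x2 x1 x3 (by grind) p.symm q s r.symm
      grind
    | .cons _ (.cons _ (.cons _ (.cons _ (.cons _ _)))), _, _, h => simp at h; omega
    | .nil, _, h, _ => simp at h
    | .cons _ .nil, _, h, _ => simp at h
    | .cons _ (.cons _ .nil), _, h, _ => simp at h
  have hle : G.egirth ≤ 5 := by simpa using egirth_le_length hcyc
  have : G.egirth = 5 := le_antisymm hle hge
  simp [girth, this]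

theorem diam_two {V : Type*} {G : SimpleGraph V}
    (hcom : ∀ u v, u ≠ v → ¬ G.Adj u v → ∃ w, G.Adj w u ∧ G.Adj w v)
    {u v : V} (huv : u ≠ v) (hn : ¬ G.Adj u v) : G.diam = 2 := by
  have hle : G.ediam ≤ 2 := by
    apply ediam_le_of_edist_le
    intro x y
    by_cases hxy : x = y
    · simp [hxy]
    by_cases ha : G.Adj x y
    · rw [edist_eq_one_iff_adj.2 ha]; norm_num
    obtain ⟨w, h1, h2⟩ := hcom x y hxy ha
    simpa using edist_le (Walk.cons h1.symm (.cons h2 .nil))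
  have hge : 2 ≤ G.ediam := by
    refine le_trans ?_ (edist_le_ediam (u := u) (v := v))
    by_contra! hlt
    have : G.edist u v ≤ 1 := Order.le_of_lt_add_one (by simpa [one_add_one_eq_two] using hlt)
    rw [edist_le_one_iff_adj_or_eq] at this
    tauto
  have : G.ediam = 2 := le_antisymm hle hge
  simp [diam, this]


theorem stmt_2 {V : Type*} [Fintype V] [DecidableEq V] (n : ℕ) (hn : 3 ≤ n)
    (hcard : Fintype.card V = n)
    (G : SimpleGraph V) [DecidableRel G.Adj] (hsat : IsKSaturated 3 G)
    (heq : ∑ v : V, (G.degree v : ℤ) ^ 2 = ((n : ℤ) - 1) ^ 2 + ((n : ℤ) - 1)) :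
    Nonempty (G ≃g Snr n 2) ∨ (G.diam = 2 ∧ G.girth = 5) := by
  by_cases hdom : ∃ w, ∀ x, x ≠ w → G.Adj w x
  · obtain ⟨w, hw⟩ := hdom
    exact Or.inl (star_iso n hn hcard G hsat w hw)
  right
  push Not at hdom
  subst hcard
  have htri : ∀ a b c, G.Adj a b → G.Adj b c → G.Adj c a → False :=
    fun a b c h1 h2 h3 => sat_no_triangle hsat h1 h2 h3
  have hcom : ∀ u v, u ≠ v → ¬ G.Adj u v → ∃ w, G.Adj w u ∧ G.Adj w v :=
    fun u v h1 h2 => sat_common_s2 hsat h1 h2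
  have huniq : ∀ u v x y, u ≠ v → G.Adj x u → G.Adj x v → G.Adj y u → G.Adj y v → x = y :=
    fun u v x y huv h1 h2 h3 h4 =>
      sat_unique hsat heq huv (fun h => htri _ _ _ h1 h h2.symm) h1 h2 h3 h4
  have hpos : 0 < Fintype.card V := by omega
  obtain ⟨v⟩ := Fintype.card_pos_iff.1 hpos
  obtain ⟨u, huv, hnvu⟩ := hdom v
  refine ⟨diam_two hcom huv.symm hnvu, ?_⟩
  obtain ⟨w, hwv, hwu⟩ := hcom v u huv.symm hnvu
  obtain ⟨x, hxw, hnwx⟩ := hdom w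
  -- a path of length three whose ends are non-adjacent closes up to a 5-cycle
  have close : ∀ a b c d, G.Adj a b → G.Adj b c → G.Adj c d → a ≠ c → b ≠ d → a ≠ d →
      ¬ G.Adj a d → G.girth = 5 := by
    intro a b c d hab hbc hcd hac hbd had hnad
    obtain ⟨e, hea, hed⟩ := hcom a d had hnad
    refine girth_five htri huniq hab hbc hcd hed.symm hea hac had hbd ?_ ?_
    · rintro rfl
      exact htri _ _ _ hbc hcd hed.symm
    · rintro rfl
      exact htri _ _ _ hab hbc hea
  have hxv : x ≠ v := by rintro rfl; exact hnwx hwv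
  have hxu : x ≠ u := by rintro rfl; exact hnwx hwu
  by_cases h1 : G.Adj x v
  · have h2 : ¬ G.Adj x u := fun h2 => hxw (huniq v u x w huv.symm h1 h2 hwv hwu)
    exact close x v w u h1 hwv.symm hwu hxw huv.symm hxu h2
  · obtain ⟨y, hyx, hyw⟩ := hcom x w hxw (fun h => hnwx h.symm)
    refine close x y w v hyx.symm hyw hwv hxw ?_ hxv h1
    rintro rfl
    exact h1 hyx.symm
end

section
/- Let G be a simple graph on n ≥ 1 vertices with real adjacency matrix A, and let λ₁ denote the largest eigenvalue of A (which exists since A is a real symmetric matrix). Then n·λ₁² ≥ ∑_{v ∈ V(G)} d(v)², where d(v) denotes the degree of the vertex v. -/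
open SimpleGraph

section Helpers
open Matrix

variable {V : Type*} [Fintype V] [DecidableEq V] {A : Matrix V V ℝ} (hA : A.IsHermitian)

lemma parseval_aux (x y : V → ℝ) :
    x ⬝ᵥ y = ∑ i, ((hA.eigenvectorBasis i : V → ℝ) ⬝ᵥ x) * ((hA.eigenvectorBasis i : V → ℝ) ⬝ᵥ y) := by
  have h := hA.eigenvectorBasis.sum_inner_mul_inner (WithLp.toLp 2 x) (WithLp.toLp 2 y)
  simp only [EuclideanSpace.inner_eq_star_dotProduct, star_trivial] at h
  rw [dotProduct_comm x y, ← h]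
  refine Finset.sum_congr rfl fun i _ => ?_
  rw [dotProduct_comm y]

lemma coef_aux (x : V → ℝ) (i : V) :
    (hA.eigenvectorBasis i : V → ℝ) ⬝ᵥ (A *ᵥ x)
      = hA.eigenvalues i * ((hA.eigenvectorBasis i : V → ℝ) ⬝ᵥ x) := by
  have hT : Aᵀ = A := by simpa using hA.eq
  rw [dotProduct_mulVec, ← mulVec_transpose, hT, hA.mulVec_eigenvectorBasis, smul_dotProduct,
    smul_eq_mul]

lemma quad_le_aux (lam : ℝ) (h : ∀ i, hA.eigenvalues i ≤ lam) (x : V → ℝ) :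
    x ⬝ᵥ (A *ᵥ x) ≤ lam * (x ⬝ᵥ x) := by
  rw [parseval_aux hA x (A *ᵥ x), parseval_aux hA x x, Finset.mul_sum]
  refine Finset.sum_le_sum fun i _ => ?_
  rw [coef_aux]
  nlinarith [mul_le_mul_of_nonneg_right (h i) (mul_self_nonneg ((hA.eigenvectorBasis i : V → ℝ) ⬝ᵥ x))]

lemma abs_eig_aux (hpos : ∀ u v, 0 ≤ A u v) (lam : ℝ) (h : ∀ i, hA.eigenvalues i ≤ lam) (i : V) :
    |hA.eigenvalues i| ≤ lam := by
  set x : V → ℝ := (hA.eigenvectorBasis i : V → ℝ) with hx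
  have h1 : x ⬝ᵥ x = 1 := by
    have := inner_self_eq_one_of_norm_eq_one (𝕜 := ℝ) (hA.eigenvectorBasis.orthonormal.1 i)
    simpa only [EuclideanSpace.inner_eq_star_dotProduct, star_trivial] using this
  have h2 : x ⬝ᵥ (A *ᵥ x) = hA.eigenvalues i := by
    rw [hx, coef_aux, ← hx, h1, mul_one]
  have h3 := quad_le_aux hA lam h (fun v => |x v|)
  have h4 : (fun v => |x v|) ⬝ᵥ (fun v => |x v|) = 1 := by
    rw [← h1]; simp [dotProduct]
  rw [h4, mul_one] at h3
  refine le_trans ?_ h3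
  rw [← h2]
  simp only [dotProduct, mulVec]
  refine (Finset.abs_sum_le_sum_abs _ _).trans (Finset.sum_le_sum fun u _ => ?_)
  rw [abs_mul]
  refine mul_le_mul_of_nonneg_left ?_ (abs_nonneg _)
  refine (Finset.abs_sum_le_sum_abs _ _).trans (Finset.sum_le_sum fun v _ => ?_)
  rw [abs_mul, abs_of_nonneg (hpos u v)]

end Helpers

theorem stmt_3 {V : Type*} [Fintype V] [DecidableEq V] (n : ℕ) (hn : 1 ≤ n)
    (hcard : Fintype.card V = n)
    (G : SimpleGraph V) [DecidableRel G.Adj]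
    (hA : (G.adjMatrix ℝ).IsHermitian)
    (lam : ℝ) (hlam : IsGreatest (Set.range hA.eigenvalues) lam) :
    (n : ℝ) * lam ^ 2 ≥ ∑ v : V, (G.degree v : ℝ) ^ 2 := by
  have hle : ∀ i, hA.eigenvalues i ≤ lam := fun i => hlam.2 ⟨i, rfl⟩
  have habs := abs_eig_aux hA (fun u v => by
    rw [SimpleGraph.adjMatrix_apply]; split_ifs <;> norm_num) lam hle
  let o : V → ℝ := fun _ => 1
  have ho : dotProduct o o = n := by simp [o, dotProduct, hcard]
  have hd : dotProduct ((G.adjMatrix ℝ).mulVec o) ((G.adjMatrix ℝ).mulVec o)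
      = ∑ v : V, (G.degree v : ℝ) ^ 2 := by
    simp only [dotProduct, o]
    refine Finset.sum_congr rfl fun v _ => ?_
    rw [SimpleGraph.adjMatrix_mulVec_apply]
    simp [sq]
  rw [← hd, ← ho, parseval_aux hA o o, parseval_aux hA _ _, Finset.sum_mul]
  refine Finset.sum_le_sum fun i _ => ?_
  rw [coef_aux]
  have h2 : hA.eigenvalues i ^ 2 ≤ lam ^ 2 := sq_le_sq' (abs_le.mp (habs i)).1 (hle i)
  nlinarith [mul_le_mul_of_nonneg_right h2
    (mul_self_nonneg (dotProduct (hA.eigenvectorBasis i : V → ℝ) o))]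
end

section
/- Let r and n be integers with 2 ≤ r < n, and let G be a K_{r+1}-saturated simple graph on n vertices. Let λ₁ denote the largest eigenvalue of the real adjacency matrix of G. Then λ₁ ≥ sqrt( ((n-1)²(r-1) + (r-1)²(n-r+1)) / n ). -/
open SimpleGraph

/-- Bollobas set-pair inequality, with first sets of size two. -/
lemma boll_aux {ι α : Type*} [DecidableEq α] (X : Finset α) :
    ∀ (F : Finset ι) (A B : ι → Finset α),
      (∀ i ∈ F, A i ⊆ X ∧ B i ⊆ X ∧ Disjoint (A i) (B i) ∧ (A i).card = 2) →
      (∀ i ∈ F, ∀ j ∈ F, i ≠ j → ¬ Disjoint (A i) (B j)) →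
      ∑ i ∈ F, (2 : ℝ) / ((((B i).card : ℝ) + 1) * (((B i).card : ℝ) + 2)) ≤ 1 := by
  induction X using Finset.strongInduction with
  | H X ih =>
  intro F A B h1 h2
  by_cases hE : ∃ i ∈ F, B i = ∅
  · obtain ⟨i, hi, hB⟩ := hE
    have hF : F = {i} := by
      ext j
      constructor
      · intro hj
        by_contra hne
        rw [Finset.mem_singleton] at hne
        exact h2 j hj i hi hne (by simp [hB])
      · intro hj
        rw [Finset.mem_singleton] at hj
        exact hj ▸ hi
    rw [hF]
    simp [hB]
  push Not at hE
  rcases F.eq_empty_or_nonempty with rfl | ⟨i0, hi0⟩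
  · simp
  have hXpos : 0 < X.card := by
    have := Finset.card_le_card (h1 i0 hi0).1
    have := (h1 i0 hi0).2.2.2
    omega
  set w : ℕ → ℝ := fun b => (2 : ℝ) / (((b : ℝ) + 1) * ((b : ℝ) + 2)) with hw
  have key : ∀ x ∈ X, ∑ i ∈ F with x ∉ A i, w ((B i).erase x).card ≤ 1 := by
    intro x hx
    refine ih (X.erase x) (Finset.erase_ssubset hx) _ A (fun i => (B i).erase x) ?_ ?_
    · intro i hi
      rw [Finset.mem_filter] at hi
      obtain ⟨a, b, c, d⟩ := h1 i hi.1
      refine ⟨?_, Finset.erase_subset_erase _ b, c.mono_right (Finset.erase_subset _ _), d⟩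
      intro y hy
      rw [Finset.mem_erase]
      exact ⟨fun h => hi.2 (h ▸ hy), a hy⟩
    · intro i hi j hj hij hd
      rw [Finset.mem_filter] at hi hj
      apply h2 i hi.1 j hj.1 hij
      rw [Finset.disjoint_left] at hd ⊢
      intro y hy hyB
      exact hd hy (Finset.mem_erase.2 ⟨fun h => hi.2 (h ▸ hy), hyB⟩)
  have hsum := Finset.sum_le_sum key
  rw [Finset.sum_const, nsmul_eq_mul, mul_one] at hsum
  simp_rw [Finset.sum_filter] at hsum
  rw [Finset.sum_comm] at hsum
  have hin : ∀ i ∈ F, ∑ x ∈ X, (if x ∉ A i then w ((B i).erase x).card else 0)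
      = X.card * w (B i).card := by
    intro i hi
    obtain ⟨a, b, c, d⟩ := h1 i hi
    rw [← Finset.sum_filter]
    have hs : X.filter (fun x => x ∉ A i) = B i ∪ (X \ (A i ∪ B i)) := by
      ext x
      have := fun hx : x ∈ A i => Finset.disjoint_left.1 c hx
      have := @b x
      simp only [Finset.mem_filter, Finset.mem_union, Finset.mem_sdiff]
      tauto
    have hdj : Disjoint (B i) (X \ (A i ∪ B i)) := by
      rw [Finset.disjoint_left]
      intro x hx
      simp [hx]
    rw [hs, Finset.sum_union hdj]
    have e1 : ∑ x ∈ B i, w ((B i).erase x).card = (B i).card * w ((B i).card - 1) := by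
      rw [← nsmul_eq_mul, ← Finset.sum_const]
      exact Finset.sum_congr rfl fun x hx => by rw [Finset.card_erase_of_mem hx]
    have e2 : ∑ x ∈ X \ (A i ∪ B i), w ((B i).erase x).card
        = (X.card - (2 + (B i).card)) * w (B i).card := by
      have : ((X \ (A i ∪ B i)).card : ℝ) = X.card - (2 + (B i).card) := by
        rw [Finset.cast_card_sdiff (Finset.union_subset a b), Finset.card_union_of_disjoint c, d]
        push_cast
        ring
      rw [← this, ← nsmul_eq_mul, ← Finset.sum_const]
      refine Finset.sum_congr rfl fun x hx => ?_
      rw [Finset.erase_eq_of_notMem]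
      intro h
      simp [h] at hx
    rw [e1, e2]
    obtain ⟨m, hm⟩ : ∃ m, (B i).card = m + 1 := by
      have : 0 < (B i).card := Finset.card_pos.2 (hE i hi)
      exact ⟨(B i).card - 1, by omega⟩
    rw [hm, hw]
    simp only [Nat.add_sub_cancel]
    push_cast
    field_simp
    ring
  rw [Finset.sum_congr rfl hin, ← Finset.mul_sum] at hsum
  have hX : (0 : ℝ) < X.card := by exact_mod_cast hXpos
  exact le_of_mul_le_mul_left (by simpa using hsum) hX

lemma pair_bound {ι α : Type*} [DecidableEq α] (W : Finset α) (F : Finset ι)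
    (A Q : ι → Finset α) (k : ℕ)
    (hA : ∀ i ∈ F, A i ⊆ W ∧ (A i).card = 2)
    (hQ : ∀ i ∈ F, Q i ⊆ W ∧ Disjoint (A i) (Q i) ∧ (Q i).card = k)
    (h : ∀ i ∈ F, ∀ j ∈ F, A i ⊆ A j ∪ Q j → i = j) :
    2 * (F.card : ℝ) ≤ ((W.card : ℝ) - k) * ((W.card : ℝ) - k - 1) := by
  rcases F.eq_empty_or_nonempty with rfl | ⟨i0, hi0⟩
  · have : (0 : ℤ) ≤ ((W.card : ℤ) - k) * ((W.card : ℤ) - k - 1) := by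
      rcases le_or_gt ((W.card : ℤ) - k) 0 with h | h
      · exact mul_nonneg_of_nonpos_of_nonpos h (by linarith)
      · exact mul_nonneg h.le (by linarith)
    have : (0 : ℝ) ≤ ((W.card : ℝ) - k) * ((W.card : ℝ) - k - 1) := by exact_mod_cast this
    simpa using this
  have hb := boll_aux W F A (fun i => W \ (A i ∪ Q i)) ?_ ?_
  · have hc : ∀ i ∈ F, (((W \ (A i ∪ Q i)).card : ℕ) : ℝ) = W.card - (2 + k) := by
      intro i hi
      rw [Finset.cast_card_sdiff (Finset.union_subset (hA i hi).1 (hQ i hi).1),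
        Finset.card_union_of_disjoint (hQ i hi).2.1, (hA i hi).2, (hQ i hi).2.2]
      push_cast
      ring
    have h0 : (0 : ℝ) ≤ (W.card : ℝ) - (2 + k) := by
      rw [← hc i0 hi0]
      positivity
    rw [Finset.sum_congr rfl (fun i hi => by rw [hc i hi]), Finset.sum_const, nsmul_eq_mul,
      ← mul_div_assoc, div_le_one (mul_pos (by linarith) (by linarith))] at hb
    linarith
  · intro i hi
    refine ⟨(hA i hi).1, Finset.sdiff_subset, ?_, (hA i hi).2⟩
    rw [Finset.disjoint_left]
    intro x hx
    simp [hx]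
  · intro i hi j hj hij hd
    apply hij
    apply h i hi j hj
    intro x hx
    by_contra hn
    exact Finset.disjoint_left.1 hd hx (Finset.mem_sdiff.2 ⟨(hA i hi).1 hx, hn⟩)
lemma quad_le {V : Type*} [Fintype V] [DecidableEq V] (M : Matrix V V ℝ) (hM : M.IsHermitian)
    (lam : ℝ) (hlam : ∀ i, hM.eigenvalues i ≤ lam) (x : V → ℝ) :
    x ⬝ᵥ (M.mulVec x) ≤ lam * (x ⬝ᵥ x) := by
  have hps : (algebraMap ℝ (Matrix V V ℝ) lam - M).PosSemidef := by
    rw [Matrix.posSemidef_iff_isHermitian_and_spectrum_nonneg]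
    refine ⟨?_, ?_⟩
    · refine Matrix.IsHermitian.sub ?_ hM
      rw [Matrix.algebraMap_eq_diagonal]
      exact Matrix.isHermitian_diagonal _
    · rw [← spectrum.singleton_sub_eq, hM.spectrum_real_eq_range_eigenvalues]
      rintro _ ⟨a, rfl, _, ⟨i, rfl⟩, rfl⟩
      simpa using hlam i
  have := hps.dotProduct_mulVec_nonneg x
  rw [Matrix.sub_mulVec, dotProduct_sub, Algebra.algebraMap_eq_smul_one, Matrix.smul_mulVec, Matrix.one_mulVec] at this
  simp at this
  linarith

lemma sum_sq_le {V : Type*} [Fintype V] [DecidableEq V] (G : SimpleGraph V) [DecidableRel G.Adj]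
    (hA : (G.adjMatrix ℝ).IsHermitian) (lam : ℝ) (hlam : ∀ i, hA.eigenvalues i ≤ lam)
    (hpos : 0 < ∑ v, (G.degree v : ℝ)) :
    0 < lam ∧ ∑ v, (G.degree v : ℝ) ^ 2 ≤ lam ^ 2 * Fintype.card V := by
  set M := G.adjMatrix ℝ with hMdef
  have h1 : ∀ x : V → ℝ, - (x ⬝ᵥ (M.mulVec x)) ≤ lam * (x ⬝ᵥ x) := by
    intro x
    have h := quad_le M hA lam hlam (fun v => |x v|)
    have e : (fun v => |x v|) ⬝ᵥ (fun v => |x v|) = x ⬝ᵥ x := by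
      simp [dotProduct]
    rw [e] at h
    refine le_trans ?_ h
    simp only [dotProduct, Matrix.mulVec, Finset.mul_sum, ← Finset.sum_neg_distrib]
    refine Finset.sum_le_sum fun i _ => Finset.sum_le_sum fun j _ => ?_
    have : 0 ≤ M i j := by
      rw [hMdef, SimpleGraph.adjMatrix_apply]
      split_ifs <;> norm_num
    calc -(x i * (M i j * x j)) ≤ |x i * (M i j * x j)| := neg_le_abs _
      _ = _ := by rw [abs_mul, abs_mul, abs_of_nonneg this]
  set y : V → ℝ := fun v => (G.degree v : ℝ) with hy
  have hM1 : M.mulVec (fun _ => 1) = y := by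
    ext v
    simp [hMdef, hy, adjMatrix_mulVec_apply]
  have hl : 0 < lam := by
    have h := quad_le M hA lam hlam (fun _ => 1)
    rw [hM1] at h
    simp only [dotProduct, one_mul, hy, mul_one] at h
    by_contra hn
    push Not at hn
    have : lam * ∑ _i : V, (1 : ℝ) ≤ 0 := mul_nonpos_of_nonpos_of_nonneg hn (by simp)
    linarith
  refine ⟨hl, ?_⟩
  have sym : ∀ a b : V → ℝ, a ⬝ᵥ M.mulVec b = b ⬝ᵥ M.mulVec a := by
    intro a b
    rw [Matrix.dotProduct_mulVec, dotProduct_comm, ← Matrix.mulVec_transpose, hMdef, transpose_adjMatrix]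
  set z : V → ℝ := fun _ => lam with hz
  have hMz : M.mulVec z = lam • y := by
    have : z = lam • (fun _ => (1 : ℝ)) := by ext; simp [hz]
    rw [this, Matrix.mulVec_smul, hM1]
  have a1 := quad_le M hA lam hlam (z + y)
  have a2 := h1 (z - y)
  simp only [Matrix.mulVec_add, Matrix.mulVec_sub, dotProduct_add, add_dotProduct, dotProduct_sub, sub_dotProduct] at a1 a2
  have s1 := sym z y
  rw [dotProduct_comm y z] at a1 a2
  have s2 : y ⬝ᵥ M.mulVec z = lam * (y ⬝ᵥ y) := by rw [hMz, dotProduct_smul, smul_eq_mul]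
  have s3 : z ⬝ᵥ z = lam ^ 2 * Fintype.card V := by simp [dotProduct, hz]; ring
  have s4 : y ⬝ᵥ y = ∑ v, (G.degree v : ℝ) ^ 2 := by simp [dotProduct, hy, sq]
  rw [← s3, ← s4]
  refine le_of_mul_le_mul_left ?_ hl
  nlinarith

lemma exists_Q {V : Type*} [Fintype V] [DecidableEq V] (r : ℕ) (hr : 1 ≤ r) (G : SimpleGraph V)
    (hsat : IsKSaturated (r + 1) G) (e : Sym2 V) (he : e ∈ Gᶜ.edgeSet) :
    ∃ Q : Finset V, Q.card = r - 1 ∧ Disjoint e.toFinset Q ∧ G.IsClique (Q : Set V) ∧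
      ∀ u ∈ e, ∀ q ∈ Q, G.Adj u q := by
  induction e using Sym2.ind with
  | _ u v =>
  rw [SimpleGraph.mem_edgeSet, SimpleGraph.compl_adj] at he
  obtain ⟨huv, hn⟩ := he
  have h := hsat.2 u v huv hn
  change ¬ (G ⊔ edge u v).CliqueFree (r + 1) at h
  unfold SimpleGraph.CliqueFree at h
  push Not at h
  obtain ⟨t, ht⟩ := h
  have hu : u ∈ t := hsat.1.mem_of_sup_edge_isNClique ht
  have hv : v ∈ t := hsat.1.mem_of_sup_edge_isNClique (x := v) (y := u) (by rwa [edge_comm])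
  have c1 := ht.1.sdiff_of_sup_edge
  have c2 : G.IsClique ((t : Set V) \ {v}) := by
    have := ht.1
    rw [edge_comm] at this
    exact this.sdiff_of_sup_edge
  refine ⟨(t.erase u).erase v, ?_, ?_, ?_, ?_⟩
  · rw [Finset.card_erase_of_mem (Finset.mem_erase.2 ⟨huv.symm, hv⟩),
      Finset.card_erase_of_mem hu, ht.2]
    omega
  · rw [Finset.disjoint_left]
    intro x hx
    simp at hx
    rcases hx with rfl | rfl <;> simp
  · refine c1.subset ?_
    intro x hx
    simp at hx
    simp [hx]
  · intro x hx q hq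
    simp at hx hq
    rcases hx with rfl | rfl
    · exact c2 (by simp [hu, huv]) (by simp [hq]) (fun h => hq.2.1 h.symm)
    · exact c1 (by simp [hv, huv.symm]) (by simp [hq]) (fun h => hq.1 h.symm)

lemma degree_sq_bound {V : Type*} [Fintype V] [DecidableEq V] (r n : ℕ) (hr : 2 ≤ r)
    (hcard : Fintype.card V = n)
    (G : SimpleGraph V) [DecidableRel G.Adj] (hsat : IsKSaturated (r + 1) G) :
    2 * ((r : ℝ) - 1) * n - r * (r - 1) ≤ ∑ v, (G.degree v : ℝ) ∧
    ((n : ℝ) - 1) ^ 2 * ((r : ℝ) - 1) + ((r : ℝ) - 1) ^ 2 * ((n : ℝ) - (r : ℝ) + 1)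
      ≤ ∑ v, (G.degree v : ℝ) ^ 2 := by
  have hQ' : ∀ e : Sym2 V, ∃ Q : Finset V, e ∈ Gᶜ.edgeSet → Q.card = r - 1 ∧
      Disjoint e.toFinset Q ∧ G.IsClique (Q : Set V) ∧ ∀ u ∈ e, ∀ q ∈ Q, G.Adj u q := by
    intro e
    by_cases he : e ∈ Gᶜ.edgeSet
    · obtain ⟨Q, h⟩ := exists_Q r (by omega) G hsat e he
      exact ⟨Q, fun _ => h⟩
    · exact ⟨∅, fun h => absurd h he⟩
  choose Q hQ using hQ'
  have hmem : ∀ {e : Sym2 V}, e ∈ Gᶜ.edgeFinset → e ∈ Gᶜ.edgeSet := fun h => by simpa using h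
  have hr1 : (((r - 1 : ℕ)) : ℝ) = (r : ℝ) - 1 := by push_cast [Nat.cast_sub (by omega : 1 ≤ r)]; ring
  have hr2 : (((r - 2 : ℕ)) : ℝ) = (r : ℝ) - 2 := by push_cast [Nat.cast_sub hr]; ring
  have hA2 : ∀ e ∈ Gᶜ.edgeFinset, e.toFinset.card = 2 := fun e he =>
    Sym2.card_toFinset_of_not_isDiag e (Gᶜ.not_isDiag_of_mem_edgeFinset he)
  -- the only non-adjacent pair inside `e ∪ Q e` is `e`
  have huniq : ∀ f ∈ Gᶜ.edgeFinset, ∀ e ∈ Gᶜ.edgeFinset,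
      f.toFinset ⊆ e.toFinset ∪ Q e → f = e := by
    intro f hf e he hsub
    obtain ⟨-, -, hc, hj⟩ := hQ e (hmem he)
    have hf' := hmem hf
    induction f using Sym2.ind with
    | _ a b =>
    rw [SimpleGraph.mem_edgeSet, SimpleGraph.compl_adj] at hf'
    obtain ⟨hab, hn⟩ := hf'
    have ha : a ∈ e.toFinset ∪ Q e := hsub (by simp)
    have hb : b ∈ e.toFinset ∪ Q e := hsub (by simp)
    rw [Finset.mem_union, Sym2.mem_toFinset] at ha hb
    rcases ha with ha | ha <;> rcases hb with hb | hb
    · exact ((Sym2.mem_and_mem_iff hab).1 ⟨ha, hb⟩).symm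
    · exact absurd (hj a ha b hb) hn
    · exact absurd (hj b hb a ha).symm hn
    · exact absurd (hc ha hb hab) hn
  have hcount : 2 * (Gᶜ.edgeFinset.card : ℝ) = n * (n - 1) - ∑ v, (G.degree v : ℝ) := by
    have h := Gᶜ.sum_degrees_eq_twice_card_edges
    have h' : ∑ v, (Gᶜ.degree v : ℝ) = 2 * (Gᶜ.edgeFinset.card : ℝ) := by exact_mod_cast h
    rw [← h']
    have : ∀ v, (Gᶜ.degree v : ℝ) = ((n : ℝ) - 1) - G.degree v := by
      intro v
      have h1 := G.degree_compl v
      have h2 := G.degree_lt_card_verts v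
      have h3 : Gᶜ.degree v + 1 + G.degree v = n := by omega
      have h4 : (Gᶜ.degree v : ℝ) + 1 + G.degree v = n := by exact_mod_cast h3
      linarith
    simp only [this, Finset.sum_sub_distrib, Finset.sum_const, Finset.card_univ, hcard,
      nsmul_eq_mul]
    ring
  have hB1 := pair_bound Finset.univ Gᶜ.edgeFinset Sym2.toFinset Q (r - 1)
    (fun e he => ⟨Finset.subset_univ _, hA2 e he⟩)
    (fun e he => ⟨Finset.subset_univ _, (hQ e (hmem he)).2.1, (hQ e (hmem he)).1⟩) huniq
  rw [Finset.card_univ, hcard, hr1, hcount] at hB1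
  have hB2 : ∀ w : V, 2 * (((Gᶜ.edgeFinset.filter (fun e => w ∈ Q e)).card : ℕ) : ℝ) ≤
      ((G.degree w : ℝ) - (r - 2)) * ((G.degree w : ℝ) - (r - 2) - 1) := by
    intro w
    have := pair_bound (G.neighborFinset w) (Gᶜ.edgeFinset.filter (fun e => w ∈ Q e))
      Sym2.toFinset (fun e => (Q e).erase w) (r - 2) ?_ ?_ ?_
    · rwa [hr2, G.card_neighborFinset_eq_degree] at this
    · intro e he
      rw [Finset.mem_filter] at he
      refine ⟨?_, hA2 e he.1⟩
      intro x hx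
      rw [Sym2.mem_toFinset] at hx
      rw [SimpleGraph.mem_neighborFinset]
      exact ((hQ e (hmem he.1)).2.2.2 x hx w he.2).symm
    · intro e he
      rw [Finset.mem_filter] at he
      obtain ⟨h1, h2, h3, h4⟩ := hQ e (hmem he.1)
      refine ⟨?_, h2.mono_right (Finset.erase_subset _ _), ?_⟩
      · intro x hx
        rw [Finset.mem_erase] at hx
        rw [SimpleGraph.mem_neighborFinset]
        exact h3 he.2 hx.2 hx.1.symm
      · rw [Finset.card_erase_of_mem he.2, h1]
        omega
    · intro f hf e he hsub
      rw [Finset.mem_filter] at he hf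
      exact huniq f hf.1 e he.1
        (hsub.trans (Finset.union_subset_union_right (Finset.erase_subset _ _)))
  have hdc : ∑ w, (((Gᶜ.edgeFinset.filter (fun e => w ∈ Q e)).card : ℕ) : ℝ)
      = ((r : ℝ) - 1) * Gᶜ.edgeFinset.card := by
    have : ∑ w, (Gᶜ.edgeFinset.filter (fun e => w ∈ Q e)).card = Gᶜ.edgeFinset.card * (r - 1) := by
      simp_rw [Finset.card_filter]
      rw [Finset.sum_comm, ← smul_eq_mul, ← Finset.sum_const]
      refine Finset.sum_congr rfl fun e he => ?_
      rw [← Finset.card_filter, ← (hQ e (hmem he)).1]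
      congr 1
      ext x
      simp
    rw [← hr1, mul_comm]
    exact_mod_cast this
  have hS := Finset.sum_le_sum (fun w (_ : w ∈ Finset.univ) => hB2 w)
  rw [← Finset.mul_sum, hdc] at hS
  have hexp : ∑ w, ((G.degree w : ℝ) - (r - 2)) * ((G.degree w : ℝ) - (r - 2) - 1)
      = ∑ w, (G.degree w : ℝ) ^ 2 - (2 * r - 3) * ∑ w, (G.degree w : ℝ)
        + n * ((r - 1) * (r - 2)) := by
    rw [Finset.mul_sum, ← Finset.sum_sub_distrib, ← hcard, ← Finset.card_univ, ← nsmul_eq_mul,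
      ← Finset.sum_const, ← Finset.sum_add_distrib]
    exact Finset.sum_congr rfl fun w _ => by ring
  rw [hexp] at hS
  have hD : 2 * ((r : ℝ) - 1) * n - r * (r - 1) ≤ ∑ v, (G.degree v : ℝ) := by nlinarith
  refine ⟨hD, ?_⟩
  have hrr : (0 : ℝ) ≤ (r : ℝ) - 2 := by
    rw [← hr2]
    positivity
  have hm := mul_le_mul_of_nonneg_left hD hrr
  have hc2 : 2 * (((r : ℝ) - 1) * Gᶜ.edgeFinset.card)
      = (r - 1) * (n * (n - 1) - ∑ v, (G.degree v : ℝ)) := by rw [← hcount]; ring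
  rw [hc2] at hS
  linarith

theorem stmt_4 {V : Type*} [Fintype V] [DecidableEq V] (r n : ℕ) (hr : 2 ≤ r)
    (hrn : r < n) (hcard : Fintype.card V = n)
    (G : SimpleGraph V) [DecidableRel G.Adj] (hsat : IsKSaturated (r + 1) G)
    (hA : (G.adjMatrix ℝ).IsHermitian)
    (lam : ℝ) (hlam : IsGreatest (Set.range hA.eigenvalues) lam) :
    lam ≥ Real.sqrt
      ((((n : ℝ) - 1) ^ 2 * ((r : ℝ) - 1) + ((r : ℝ) - 1) ^ 2 * ((n : ℝ) - (r : ℝ) + 1)) / n) := by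
  obtain ⟨h1, h2⟩ := degree_sq_bound r n hr hcard G hsat
  have hr' : (2 : ℝ) ≤ r := by exact_mod_cast hr
  have hn' : (r : ℝ) < n := by exact_mod_cast hrn
  have hpos : 0 < ∑ v, (G.degree v : ℝ) := by
    refine lt_of_lt_of_le ?_ h1
    nlinarith
  obtain ⟨h3, h4⟩ := sum_sq_le G hA lam (fun i => hlam.2 ⟨i, rfl⟩) hpos
  rw [hcard] at h4
  apply Real.sqrt_le_iff.2
  refine ⟨h3.le, ?_⟩
  rw [div_le_iff₀ (by linarith)]
  linarith
end

section
/- Let r and n be integers with 2 ≤ r < n. The largest eigenvalue of the real adjacency matrix of the graph S_{n,r} equals ( (r-2) + sqrt( (r-2)² + 4(r-1)(n-r+1) ) ) / 2. -/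
open SimpleGraph

instance (n r : ℕ) : DecidableRel (Snr n r).Adj := fun u v =>
  decidable_of_iff _ (SimpleGraph.fromRel_adj _ u v).symm

lemma snr_sum_aux (n a : ℕ) (h : a ≤ n) (x y : ℝ) :
    ∑ j : Fin n, (if (j : ℕ) < a then x else y) = a * x + ((n : ℝ) - a) * y := by
  rw [Fin.sum_univ_eq_sum_range (fun j => if j < a then x else y) n]
  obtain ⟨b, rfl⟩ := Nat.exists_eq_add_of_le h
  rw [Finset.sum_range_add]
  rw [Finset.sum_congr rfl (g := fun _ => x)
    (fun j hj => if_pos (Finset.mem_range.1 hj))]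
  simp

lemma snr_adj (n r : ℕ) (i j : Fin n) :
    (Snr n r).Adj i j ↔ i ≠ j ∧ ((i : ℕ) < r - 1 ∨ (j : ℕ) < r - 1) := by
  unfold Snr
  rw [SimpleGraph.fromRel_adj]
  tauto

lemma snr_mulVec (n r : ℕ) (hr : 2 ≤ r) (hrn : r < n) (m : ℝ)
    (hm : m ^ 2 = ((r : ℝ) - 2) * m + ((r : ℝ) - 1) * ((n : ℝ) - r + 1)) (i : Fin n) :
    ∑ j, ((Snr n r).adjMatrix ℝ) i j * (if (j : ℕ) < r - 1 then m else (r : ℝ) - 1)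
      = m * (if (i : ℕ) < r - 1 then m else (r : ℝ) - 1) := by
  have hc : ((r - 1 : ℕ) : ℝ) = (r : ℝ) - 1 := by
    rw [Nat.cast_sub (by omega)]; simp
  by_cases hi : (i : ℕ) < r - 1
  · have h1 : ∀ j, ((Snr n r).adjMatrix ℝ) i j * (if (j : ℕ) < r - 1 then m else (r : ℝ) - 1)
        = (if (j : ℕ) < r - 1 then m else (r : ℝ) - 1) - (if i = j then m else 0) := by
      intro j
      rw [SimpleGraph.adjMatrix_apply]
      simp only [snr_adj]
      by_cases hij : i = j
      · subst hij; simp [hi]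
      · simp [hij, hi]
    rw [Finset.sum_congr rfl (fun j _ => h1 j), Finset.sum_sub_distrib,
      snr_sum_aux n (r - 1) (by omega), hc]
    simp only [Finset.sum_ite_eq, Finset.mem_univ, if_true, hi]
    linear_combination -hm
  · have h1 : ∀ j, ((Snr n r).adjMatrix ℝ) i j * (if (j : ℕ) < r - 1 then m else (r : ℝ) - 1)
        = (if (j : ℕ) < r - 1 then m else 0) := by
      intro j
      rw [SimpleGraph.adjMatrix_apply]
      simp only [snr_adj]
      by_cases hij : i = j
      · subst hij; simp [hi]
      · by_cases hj : (j : ℕ) < r - 1 <;> simp [hij, hi, hj]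
    rw [Finset.sum_congr rfl (fun j _ => h1 j),
      snr_sum_aux n (r - 1) (by omega), hc]
    simp only [hi, if_false]
    ring

/-- Perron-type bound: a positive eigenvector dominates all real eigenvalues. -/
lemma perron_bound {n : ℕ} (A : Matrix (Fin n) (Fin n) ℝ) (hA : ∀ i j, 0 ≤ A i j)
    (w : Fin n → ℝ) (hw : ∀ i, 0 < w i) (m : ℝ) (hm : ∀ i, ∑ j, A i j * w j = m * w i)
    (v : Fin n → ℝ) (hv : v ≠ 0) (l : ℝ) (hl : ∀ i, ∑ j, A i j * v j = l * v i) : l ≤ m := by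
  obtain ⟨k, hk⟩ := Function.ne_iff.1 hv
  obtain ⟨i, -, hi⟩ := Finset.exists_max_image Finset.univ (fun i => |v i| / w i)
    ⟨k, Finset.mem_univ k⟩
  set t := |v i| / w i with ht
  have hle : ∀ j, |v j| ≤ t * w j := fun j =>
    (div_le_iff₀ (hw j)).1 (hi j (Finset.mem_univ j))
  have hvi : |v i| = t * w i := by rw [ht, div_mul_cancel₀ _ (hw i).ne']
  have htpos : 0 < t := by
    have : 0 < |v k| / w k := div_pos (abs_pos.2 hk) (hw k)
    exact this.trans_le (hi k (Finset.mem_univ k))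
  have h0 : 0 < |v i| := by rw [hvi]; exact mul_pos htpos (hw i)
  refine le_of_mul_le_mul_right ?_ h0
  calc l * |v i| ≤ |l| * |v i| := by gcongr; exact le_abs_self l
    _ = |∑ j, A i j * v j| := by rw [hl, abs_mul]
    _ ≤ ∑ j, |A i j * v j| := Finset.abs_sum_le_sum_abs _ _
    _ ≤ ∑ j, t * (A i j * w j) := by
        refine Finset.sum_le_sum fun j _ => ?_
        rw [abs_mul, abs_of_nonneg (hA i j)]
        nlinarith [mul_le_mul_of_nonneg_left (hle j) (hA i j)]
    _ = m * |v i| := by rw [← Finset.mul_sum, hm, hvi]; ring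

/-- The largest eigenvalue of the adjacency matrix of `S_{n,r}` equals
`((r-2) + sqrt((r-2)² + 4(r-1)(n-r+1))) / 2`. -/
theorem stmt_5 (r n : ℕ) (hr : 2 ≤ r) (hrn : r < n)
    (hA : ((Snr n r).adjMatrix ℝ).IsHermitian) :
    IsGreatest (Set.range hA.eigenvalues)
      ((((r : ℝ) - 2) + Real.sqrt (((r : ℝ) - 2) ^ 2
        + 4 * ((r : ℝ) - 1) * ((n : ℝ) - (r : ℝ) + 1))) / 2) := by
  have hr' : (2 : ℝ) ≤ r := by exact_mod_cast hr
  have hn' : (r : ℝ) < n := by exact_mod_cast hrn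
  have hprod : 0 < ((r : ℝ) - 1) * ((n : ℝ) - r + 1) := mul_pos (by linarith) (by linarith)
  have hD : 0 < ((r : ℝ) - 2) ^ 2 + 4 * ((r : ℝ) - 1) * ((n : ℝ) - (r : ℝ) + 1) := by
    nlinarith [sq_nonneg ((r : ℝ) - 2)]
  have hs := Real.sq_sqrt hD.le
  have hsp := Real.sqrt_pos.2 hD
  set s := Real.sqrt (((r : ℝ) - 2) ^ 2 + 4 * ((r : ℝ) - 1) * ((n : ℝ) - (r : ℝ) + 1)) with hsdef
  set m := (((r : ℝ) - 2) + s) / 2 with hmdef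
  have hm : m ^ 2 = ((r : ℝ) - 2) * m + ((r : ℝ) - 1) * ((n : ℝ) - r + 1) := by
    rw [hmdef]; linear_combination hs / 4
  have hmpos : 0 < m := by rw [hmdef]; linarith
  have hE := snr_mulVec n r hr hrn m hm
  have hw : ∀ i : Fin n, 0 < (if (i : ℕ) < r - 1 then m else (r : ℝ) - 1) := by
    intro i; split_ifs <;> linarith
  constructor
  · rw [← hA.spectrum_real_eq_range_eigenvalues, ← Matrix.spectrum_toLin',
      ← Module.End.hasEigenvalue_iff_mem_spectrum]
    refine Module.End.hasEigenvalue_of_hasEigenvector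
      (x := fun j : Fin n => if (j : ℕ) < r - 1 then m else (r : ℝ) - 1) ⟨?_, ?_⟩
    · rw [Module.End.mem_eigenspace_iff]
      funext i
      exact hE i
    · intro h
      exact (hw ⟨0, by omega⟩).ne' (congrFun h ⟨0, by omega⟩)
  · rintro _ ⟨k, rfl⟩
    refine perron_bound _ ?_ _ hw m hE (⇑(hA.eigenvectorBasis k)) ?_ _ ?_
    · intro i j
      rw [SimpleGraph.adjMatrix_apply]; split_ifs <;> norm_num
    · intro h
      apply hA.eigenvectorBasis.orthonormal.ne_zero k
      ext i
      exact congrFun h i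
    · intro i
      exact congrFun (hA.mulVec_eigenvectorBasis k) i
end

section
/- Let r and n be integers with 2 ≤ r and n ≥ r+1, and let G be a K_{r+1}-saturated simple graph on n vertices. Then ∑_{v ∈ V(G)} (d(v)+1)(d(v)+1-r) ≥ (r-1)·n·(n-r), where d(v) denotes the degree of v and the sum is computed in the integers. -/
open SimpleGraph

/-- Bollobás set-pair inequality for 2-sets against arbitrary sets. -/
theorem setpair_two {V ι : Type*} [DecidableEq V] [DecidableEq ι] (N : ℕ) :
    ∀ (U : Finset V) (I : Finset ι) (A B : ι → Finset V), U.card = N →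
      (∀ i ∈ I, A i ⊆ U) → (∀ i ∈ I, B i ⊆ U) → (∀ i ∈ I, (A i).card = 2) →
      (∀ i ∈ I, Disjoint (A i) (B i)) →
      (∀ i ∈ I, ∀ j ∈ I, i ≠ j → ¬ Disjoint (A i) (B j)) →
      ∑ i ∈ I, (2 : ℚ) / ((((B i).card : ℚ) + 1) * (((B i).card : ℚ) + 2)) ≤ 1 := by
  induction N with
  | zero =>
    intro U I A B hU hA hB hc hd hx
    have : I = ∅ := by
      rw [Finset.eq_empty_iff_forall_notMem]
      intro i hi
      have h1 := Finset.card_le_card (hA i hi)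
      have := hc i hi
      omega
    simp [this]
  | succ N ih =>
    intro U I A B hU hA hB hc hd hx
    by_cases h0 : ∃ i ∈ I, (B i).card = 0
    · obtain ⟨i, hi, hb⟩ := h0
      have hI : I = {i} := by
        ext j
        simp only [Finset.mem_singleton]
        constructor
        · intro hj
          by_contra hne
          have := hx j hj i hi hne
          rw [Finset.card_eq_zero.mp hb] at this
          simp at this
        · rintro rfl; exact hi
      rw [hI, Finset.sum_singleton, hb]
      norm_num
    · push Not at h0
      have key : ∀ x ∈ U, ∑ i ∈ I with x ∉ A i,
          (2 : ℚ) / (((((B i).erase x).card : ℚ) + 1) * ((((B i).erase x).card : ℚ) + 2)) ≤ 1 := by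
        intro x hxU
        apply ih (U.erase x) _ A (fun i => (B i).erase x)
        · rw [Finset.card_erase_of_mem hxU, hU]; rfl
        · intro i hi
          rw [Finset.mem_filter] at hi
          exact Finset.subset_erase.mpr ⟨hA i hi.1, hi.2⟩
        · intro i hi
          rw [Finset.mem_filter] at hi
          exact Finset.erase_subset_erase _ (hB i hi.1)
        · intro i hi
          rw [Finset.mem_filter] at hi
          exact hc i hi.1
        · intro i hi
          rw [Finset.mem_filter] at hi
          exact (hd i hi.1).mono_right (Finset.erase_subset _ _)
        · intro i hi j hj hij
          rw [Finset.mem_filter] at hi hj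
          have := hx i hi.1 j hj.1 hij
          rw [Finset.not_disjoint_iff] at this ⊢
          obtain ⟨y, hy1, hy2⟩ := this
          refine ⟨y, hy1, Finset.mem_erase.mpr ⟨?_, hy2⟩⟩
          rintro rfl
          exact hi.2 hy1
      have hsum := Finset.sum_le_sum key
      simp only [Finset.sum_const, hU, nsmul_eq_mul, mul_one, Finset.sum_filter] at hsum
      rw [Finset.sum_comm] at hsum
      have hterm : ∀ i ∈ I, (∑ x ∈ U, if x ∉ A i then
          (2 : ℚ) / (((((B i).erase x).card : ℚ) + 1) * ((((B i).erase x).card : ℚ) + 2)) else 0)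
          = ((N : ℚ) + 1) * (2 / ((((B i).card : ℚ) + 1) * (((B i).card : ℚ) + 2))) := by
        intro i hi
        obtain ⟨b, hb⟩ := Nat.exists_eq_succ_of_ne_zero (h0 i hi)
        have hsub : A i ∪ B i ⊆ U := Finset.union_subset (hA i hi) (hB i hi)
        rw [← Finset.sum_sdiff hsub, Finset.sum_union (hd i hi)]
        have e1 : (∑ x ∈ A i, if x ∉ A i then
          (2 : ℚ) / (((((B i).erase x).card : ℚ) + 1) * ((((B i).erase x).card : ℚ) + 2)) else 0)
            = 0 := Finset.sum_eq_zero (fun x hx => by simp [hx])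
        have e2 : (∑ x ∈ B i, if x ∉ A i then
          (2 : ℚ) / (((((B i).erase x).card : ℚ) + 1) * ((((B i).erase x).card : ℚ) + 2)) else 0)
            = ∑ x ∈ B i, (2 : ℚ) / (((b : ℚ) + 1) * ((b : ℚ) + 2)) := by
          apply Finset.sum_congr rfl
          intro x hx
          rw [if_pos (Finset.disjoint_right.mp (hd i hi) hx), Finset.card_erase_of_mem hx, hb]
          simp
        have e3 : (∑ x ∈ U \ (A i ∪ B i), if x ∉ A i then
          (2 : ℚ) / (((((B i).erase x).card : ℚ) + 1) * ((((B i).erase x).card : ℚ) + 2)) else 0)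
            = ∑ x ∈ U \ (A i ∪ B i), (2 : ℚ) / (((b : ℚ) + 2) * ((b : ℚ) + 3)) := by
          apply Finset.sum_congr rfl
          intro x hx
          simp only [Finset.mem_sdiff, Finset.mem_union, not_or] at hx
          rw [if_pos hx.2.1, Finset.erase_eq_of_notMem hx.2.2, hb]
          push_cast
          ring_nf
        rw [e1, e2, e3]
        have hcard := Finset.card_sdiff_add_card_eq_card hsub
        rw [Finset.card_union_of_disjoint (hd i hi), hc i hi, hb, hU] at hcard
        have hq : ((U \ (A i ∪ B i)).card : ℚ) = N + 1 - (b + 3) := by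
          have : ((U \ (A i ∪ B i)).card : ℚ) + (2 + (b + 1)) = N + 1 := by exact_mod_cast hcard
          linarith
        simp only [Finset.sum_const, nsmul_eq_mul, hq, hb]
        push_cast
        have : (b : ℚ) + 1 ≠ 0 := by positivity
        have : (b : ℚ) + 2 ≠ 0 := by positivity
        have : (b : ℚ) + 3 ≠ 0 := by positivity
        have : (b : ℚ) + 1 + 1 ≠ 0 := by positivity
        have : (b : ℚ) + 1 + 2 ≠ 0 := by positivity
        field_simp
        ring
      rw [Finset.sum_congr rfl hterm, ← Finset.mul_sum] at hsum
      have hpos : (0 : ℚ) < (N : ℚ) + 1 := by positivity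
      push_cast at hsum
      exact le_of_mul_le_mul_left (by simpa using hsum) hpos

theorem exists_clique_of_sat {V : Type*} [Fintype V] [DecidableEq V] (r : ℕ)
    (G : SimpleGraph V) (hsat : IsKSaturated (r + 1) G) (u v : V) (huv : u ≠ v)
    (hadj : ¬ G.Adj u v) :
    ∃ K : Finset V, K.card = r - 1 ∧ (∀ x ∈ K, ∀ y ∈ K, x ≠ y → G.Adj x y) ∧
      (∀ x ∈ K, G.Adj u x) ∧ (∀ x ∈ K, G.Adj v x) := by
  have h := hsat.2 u v huv hadj
  unfold SimpleGraph.CliqueFree at h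
  push Not at h
  obtain ⟨s, hs⟩ := h
  have hA : ∀ x ∈ s, ∀ y ∈ s, x ≠ y → G.Adj x y ∨ (x = u ∧ y = v) ∨ (x = v ∧ y = u) := by
    intro x hx y hy hxy
    have := hs.isClique hx hy hxy
    simp only [SimpleGraph.sup_adj, SimpleGraph.fromEdgeSet_adj, Set.mem_singleton_iff,
      Sym2.eq_iff] at this
    tauto
  have hmem : u ∈ s ∧ v ∈ s := by
    by_contra hcon
    apply hsat.1 s
    refine ⟨?_, hs.card_eq⟩
    intro x hx y hy hxy
    rcases hA x hx y hy hxy with h | ⟨rfl, rfl⟩ | ⟨rfl, rfl⟩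
    · exact h
    · exact absurd ⟨hx, hy⟩ hcon
    · exact absurd ⟨hy, hx⟩ hcon
  refine ⟨(s.erase u).erase v, ?_, ?_, ?_, ?_⟩
  · rw [Finset.card_erase_of_mem (Finset.mem_erase.mpr ⟨huv.symm, hmem.2⟩),
      Finset.card_erase_of_mem hmem.1, hs.card_eq]
    omega
  · intro x hx y hy hxy
    simp only [Finset.mem_erase] at hx hy
    have := hA x hx.2.2 y hy.2.2 hxy
    tauto
  · intro x hx
    simp only [Finset.mem_erase] at hx
    have := hA u hmem.1 x hx.2.2 (Ne.symm hx.2.1)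
    tauto
  · intro x hx
    simp only [Finset.mem_erase] at hx
    have := hA v hmem.2 x hx.2.2 (Ne.symm hx.1)
    tauto

theorem local_bound {V : Type*} [Fintype V] [DecidableEq V] (r : ℕ) (hr : 2 ≤ r)
    (G : SimpleGraph V) [DecidableRel G.Adj] (K : Sym2 V → Finset V)
    (hK : ∀ e ∈ Gᶜ.edgeFinset, (K e).card = r - 1 ∧
      (∀ x ∈ K e, ∀ y ∈ K e, x ≠ y → G.Adj x y) ∧ (∀ u ∈ e, ∀ x ∈ K e, G.Adj u x)) (v : V) :
    2 * ((Gᶜ.edgeFinset.filter (fun e => v ∈ K e)).card : ℤ) ≤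
      ((G.degree v : ℤ) - r + 1) * ((G.degree v : ℤ) - r + 2) := by
  set I := Gᶜ.edgeFinset.filter (fun e => v ∈ K e) with hI
  have hcardA : ∀ e ∈ I, e.toFinset.card = 2 := by
    intro e he
    rw [hI, Finset.mem_filter, SimpleGraph.mem_edgeFinset] at he
    exact Sym2.card_toFinset_of_not_isDiag e (Gᶜ.not_isDiag_of_mem_edgeSet he.1)
  have hdisj : ∀ e ∈ I, Disjoint e.toFinset (K e) := by
    intro e he
    rw [hI, Finset.mem_filter] at he
    rw [Finset.disjoint_left]
    intro x hx hxK
    exact G.loopless.irrefl x ((hK e he.1).2.2 x (Sym2.mem_toFinset.mp hx) x hxK)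
  have hsub : ∀ e ∈ I, e.toFinset ∪ (K e).erase v ⊆ G.neighborFinset v := by
    intro e he x hx
    rw [hI, Finset.mem_filter] at he
    rw [SimpleGraph.mem_neighborFinset]
    rw [Finset.mem_union, Sym2.mem_toFinset, Finset.mem_erase] at hx
    rcases hx with hx | hx
    · exact ((hK e he.1).2.2 x hx v he.2).symm
    · exact (hK e he.1).2.1 v he.2 x hx.2 (Ne.symm hx.1)
  have hcS : ∀ e ∈ I, (e.toFinset ∪ (K e).erase v).card = r := by
    intro e he
    rw [Finset.card_union_of_disjoint ((hdisj e he).mono_right (Finset.erase_subset _ _)),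
      hcardA e he]
    rw [hI, Finset.mem_filter] at he
    rw [Finset.card_erase_of_mem he.2, (hK e he.1).1]
    omega
  have hB : ∀ e ∈ I, (G.neighborFinset v \ (e.toFinset ∪ (K e).erase v)).card + r
      = G.degree v := by
    intro e he
    have := Finset.card_sdiff_add_card_eq_card (hsub e he)
    rw [hcS e he] at this
    rw [this, SimpleGraph.card_neighborFinset_eq_degree]
  rcases I.eq_empty_or_nonempty with h0 | ⟨e0, he0⟩
  · rw [h0]
    simp only [Finset.card_empty, Nat.cast_zero, mul_zero]
    rcases le_or_gt 0 ((G.degree v : ℤ) - r + 1) with h | h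
    · exact mul_nonneg h (by omega)
    · exact mul_nonneg_of_nonpos_of_nonpos h.le (by omega)
  · have hle : r ≤ G.degree v := by have := hB e0 he0; omega
    obtain ⟨b, hb⟩ := Nat.exists_eq_add_of_le hle
    have main := setpair_two (G.neighborFinset v).card (G.neighborFinset v) I
      (fun e => e.toFinset) (fun e => G.neighborFinset v \ (e.toFinset ∪ (K e).erase v)) rfl
      (fun e he => Finset.subset_union_left.trans (hsub e he))
      (fun e he => Finset.sdiff_subset) hcardA
      (fun e he => Finset.disjoint_sdiff.mono_left Finset.subset_union_left) (by
        intro e he f hf hef hd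
        apply hef
        have h1 : ∀ x ∈ e, x ∈ f ∨ x ∈ K f := by
          intro x hx
          have hxe := Sym2.mem_toFinset.mpr hx
          have h2 := Finset.disjoint_left.mp hd hxe
          have h3 := hsub e he (Finset.mem_union_left _ hxe)
          by_contra hcon
          apply h2
          simp only [Finset.mem_sdiff, Finset.mem_union, Sym2.mem_toFinset, Finset.mem_erase]
          tauto
        rw [hI, Finset.mem_filter] at he hf
        obtain ⟨-, hf2, hf3⟩ := hK f hf.1
        have he1 := he.1
        clear_value I
        clear he hd
        induction e using Sym2.ind with
        | _ x y =>
          rw [SimpleGraph.mem_edgeFinset, SimpleGraph.mem_edgeSet, SimpleGraph.compl_adj] at he1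
          have hx := h1 x (by simp)
          have hy := h1 y (by simp)
          rcases hx with hx | hx <;> rcases hy with hy | hy
          · exact ((Sym2.mem_and_mem_iff he1.1).mp ⟨hx, hy⟩).symm
          · exact absurd (hf3 x hx y hy) he1.2
          · exact absurd (hf3 y hy x hx).symm he1.2
          · exact absurd (hf2 x hx y hy he1.1) he1.2)
    have hcongr : ∀ e ∈ I, (2 : ℚ) /
        ((((G.neighborFinset v \ (e.toFinset ∪ (K e).erase v)).card : ℚ) + 1) *
        (((G.neighborFinset v \ (e.toFinset ∪ (K e).erase v)).card : ℚ) + 2))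
        = 2 / (((b : ℚ) + 1) * ((b : ℚ) + 2)) := by
      intro e he
      have : (G.neighborFinset v \ (e.toFinset ∪ (K e).erase v)).card = b := by
        have := hB e he; omega
      rw [this]
    rw [Finset.sum_congr rfl hcongr, Finset.sum_const, nsmul_eq_mul, ← mul_div_assoc,
      div_le_one (by positivity)] at main
    have main' : (I.card : ℤ) * 2 ≤ ((b : ℤ) + 1) * (b + 2) := by exact_mod_cast main
    rw [hb]
    push_cast
    linarith [main']

theorem stmt_6 {V : Type*} [Fintype V] [DecidableEq V] (r n : ℕ) (hr : 2 ≤ r)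
    (hn : r + 1 ≤ n) (hcard : Fintype.card V = n)
    (G : SimpleGraph V) [DecidableRel G.Adj] (hsat : IsKSaturated (r + 1) G) :
    ∑ v : V, ((G.degree v : ℤ) + 1) * ((G.degree v : ℤ) + 1 - (r : ℤ))
      ≥ ((r : ℤ) - 1) * (n : ℤ) * ((n : ℤ) - (r : ℤ)) := by
  have hex : ∀ e : Sym2 V, ∃ K : Finset V, e ∈ Gᶜ.edgeFinset → (K.card = r - 1 ∧
      (∀ x ∈ K, ∀ y ∈ K, x ≠ y → G.Adj x y) ∧ (∀ u ∈ e, ∀ x ∈ K, G.Adj u x)) := by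
    intro e
    by_cases he : e ∈ Gᶜ.edgeFinset
    · induction e using Sym2.ind with
      | _ x y =>
        rw [SimpleGraph.mem_edgeFinset, SimpleGraph.mem_edgeSet, SimpleGraph.compl_adj] at he
        obtain ⟨K, h1, h2, h3, h4⟩ := exists_clique_of_sat r G hsat x y he.1 he.2
        refine ⟨K, fun _ => ⟨h1, h2, ?_⟩⟩
        intro u hu
        rcases Sym2.mem_iff.mp hu with rfl | rfl
        · exact h3
        · exact h4
    · exact ⟨∅, fun h => absurd h he⟩
  choose K hK using hex
  have hloc := Finset.sum_le_sum (fun v (_ : v ∈ Finset.univ) => local_bound r hr G K hK v)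
  have hdc : ∑ v : V, (Gᶜ.edgeFinset.filter (fun e => v ∈ K e)).card
      = Gᶜ.edgeFinset.card * (r - 1) := by
    simp only [Finset.card_filter]
    rw [Finset.sum_comm]
    rw [← smul_eq_mul, ← Finset.sum_const]
    apply Finset.sum_congr rfl
    intro e he
    rw [← Finset.card_filter, Finset.filter_univ_mem, (hK e he).1]
  have hdeg : 2 * (Gᶜ.edgeFinset.card : ℤ) = (n : ℤ) * (n - 1) - ∑ v : V, (G.degree v : ℤ) := by
    have h := Gᶜ.sum_degrees_eq_twice_card_edges
    have h' : ((∑ v : V, Gᶜ.degree v : ℕ) : ℤ) = 2 * (Gᶜ.edgeFinset.card : ℤ) := by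
      exact_mod_cast h
    rw [← h']
    push_cast
    have h2 : ∀ v : V, (Gᶜ.degree v : ℤ) = (n : ℤ) - 1 - G.degree v := by
      intro v
      have h3 := G.degree_compl v
      have h4 := G.degree_lt_card_verts v
      rw [hcard] at h3 h4
      omega
    simp only [h2, Finset.sum_sub_distrib, Finset.sum_const, Finset.card_univ, hcard, nsmul_eq_mul]
    ring
  rw [← Finset.mul_sum] at hloc
  have hdc' : ∑ v : V, ((Gᶜ.edgeFinset.filter (fun e => v ∈ K e)).card : ℤ)
      = (Gᶜ.edgeFinset.card : ℤ) * ((r : ℤ) - 1) := by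
    have : ((r - 1 : ℕ) : ℤ) = (r : ℤ) - 1 := by omega
    rw [← this]
    exact_mod_cast hdc
  rw [hdc'] at hloc
  have e1 : ∑ v : V, ((G.degree v : ℤ) - r + 1) * ((G.degree v : ℤ) - r + 2)
      = ∑ v : V, ((G.degree v : ℤ) + 1) * ((G.degree v : ℤ) + 1 - (r : ℤ))
        - ((r : ℤ) - 1) * ∑ v : V, (G.degree v : ℤ) + n * (((r : ℤ) - 1) * (r - 1)) := by
    have : (n : ℤ) * (((r : ℤ) - 1) * (r - 1)) = ∑ v : V, ((r : ℤ) - 1) * (r - 1) := by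
      rw [Finset.sum_const, Finset.card_univ, hcard, nsmul_eq_mul]
    rw [this, Finset.mul_sum, ← Finset.sum_sub_distrib, ← Finset.sum_add_distrib]
    apply Finset.sum_congr rfl
    intro v _
    ring
  rw [e1] at hloc
  have e2 : 2 * ((Gᶜ.edgeFinset.card : ℤ) * ((r : ℤ) - 1))
      = ((n : ℤ) * (n - 1) - ∑ v : V, (G.degree v : ℤ)) * ((r : ℤ) - 1) := by
    rw [← hdeg]; ring
  rw [e2] at hloc
  linarith
end

section
/- Let r ≥ 2 be an integer and let G be a K_{r+1}-saturated simple graph on a finite vertex set. For each vertex v of G, let f(v) be the number of unordered pairs {x, y} of distinct non-adjacent vertices with x, y ∈ N(v) such that the subgraph of G induced on N(x) ∩ N(y) ∩ N(v) contains a clique of size r-2. Then (r-1)·m̄ ≤ ∑_{v ∈ V(G)} f(v), where m̄ is the number of unordered pairs of distinct non-adjacent vertices of G (the number of edges of the complement of G). -/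
open SimpleGraph

/-- `f G r v` is the number of unordered pairs `{x, y}` of distinct non-adjacent vertices
with `x, y ∈ N(v)` such that the subgraph of `G` induced on `N(x) ∩ N(y) ∩ N(v)`
contains a clique of size `r - 2`. -/
noncomputable def f {V : Type*} (G : SimpleGraph V) (r : ℕ) (v : V) : ℕ :=
  Set.ncard {e : Sym2 V | ∃ x y : V, e = s(x, y) ∧ x ≠ y ∧ ¬ G.Adj x y ∧
    G.Adj v x ∧ G.Adj v y ∧
    ¬ (G.induce (G.neighborSet x ∩ G.neighborSet y ∩ G.neighborSet v)).CliqueFree (r - 2)}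

lemma aux_clique {V : Type*} [Fintype V] (r : ℕ) (hr : 2 ≤ r)
    (G : SimpleGraph V) (hsat : IsKSaturated (r + 1) G) (x y : V) (hne : x ≠ y)
    (hn : ¬ G.Adj x y) : ∃ T : Finset V, T.card = r - 1 ∧ G.IsClique (T : Set V) ∧
      ∀ v ∈ T, G.Adj v x ∧ G.Adj v y := by
  classical
  have h := hsat.2 x y hne hn
  unfold SimpleGraph.CliqueFree at h
  push Not at h
  obtain ⟨S, hS⟩ := h
  have hc := hS.isClique
  have key : ∀ a ∈ S, ∀ b ∈ S, a ≠ b → G.Adj a b ∨ (a = x ∧ b = y) ∨ (a = y ∧ b = x) := by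
    intro a ha b hb hab
    have := hc ha hb hab
    simp only [sup_adj, fromEdgeSet_adj, Set.mem_singleton_iff, Sym2.eq_iff] at this
    tauto
  have hxy : x ∈ S ∧ y ∈ S := by
    by_contra hcon
    refine hsat.1 S ⟨?_, hS.card_eq⟩
    intro a ha b hb hab
    rcases key a ha b hb hab with h | ⟨rfl, rfl⟩ | ⟨rfl, rfl⟩
    · exact h
    · exact absurd ⟨ha, hb⟩ hcon
    · exact absurd ⟨hb, ha⟩ hcon
  refine ⟨(S.erase x).erase y, ?_, ?_, ?_⟩
  · rw [Finset.card_erase_of_mem (by simp [hxy.2, hne.symm]), Finset.card_erase_of_mem hxy.1,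
      hS.card_eq]
    omega
  · intro a ha b hb hab
    simp only [Finset.coe_erase, Set.mem_sdiff, Finset.mem_coe, Set.mem_singleton_iff] at ha hb
    have := key a ha.1.1 b hb.1.1 hab
    tauto
  · intro v hv
    simp only [Finset.mem_erase] at hv
    have h1 := key v hv.2.2 x hxy.1 hv.2.1
    have h2 := key v hv.2.2 y hxy.2 hv.1
    tauto

theorem stmt_8 {V : Type*} [Fintype V] (r : ℕ) (hr : 2 ≤ r)
    (G : SimpleGraph V) (hsat : IsKSaturated (r + 1) G) :
    (r - 1) * Set.ncard (Gᶜ).edgeSet ≤ ∑ v : V, f G r v := by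
  classical
  set A : V → Set (Sym2 V) := fun v => {e : Sym2 V | ∃ x y : V, e = s(x, y) ∧ x ≠ y ∧ ¬ G.Adj x y ∧
    G.Adj v x ∧ G.Adj v y ∧
    ¬ (G.induce (G.neighborSet x ∩ G.neighborSet y ∩ G.neighborSet v)).CliqueFree (r - 2)} with hA
  have hf : ∀ v, f G r v = ∑ e : Sym2 V, if e ∈ A v then 1 else 0 := by
    intro v
    change (A v).ncard = _
    rw [Set.ncard_eq_toFinset_card', Finset.sum_boole]
    simp only [Nat.cast_id]
    congr 1
    ext e
    simp
  simp_rw [hf]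
  rw [Finset.sum_comm, Set.ncard_eq_toFinset_card', mul_comm, ← smul_eq_mul, ← Finset.sum_const]
  refine le_trans (Finset.sum_le_sum (g := fun e => ∑ v : V, if e ∈ A v then 1 else 0) ?_)
    (Finset.sum_le_sum_of_subset (Finset.subset_univ _))
  intro e he
  rw [Set.mem_toFinset] at he
  induction e using Sym2.ind with
  | _ x y =>
  rw [mem_edgeSet, compl_adj] at he
  obtain ⟨T, hT, hc, hadj⟩ := aux_clique r hr G hsat x y he.1 he.2
  rw [Finset.sum_boole, Nat.cast_id, ← hT]
  apply Finset.card_le_card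
  intro v hv
  simp only [Finset.mem_filter, Finset.mem_univ, true_and]
  refine ⟨x, y, rfl, he.1, he.2, (hadj v hv).1, (hadj v hv).2, ?_⟩
  intro hfree
  refine hfree ((T.erase v).subtype
    (· ∈ G.neighborSet x ∩ G.neighborSet y ∩ G.neighborSet v)) ⟨?_, ?_⟩
  · intro a ha b hb hab
    simp only [Finset.mem_coe, Finset.mem_subtype, Finset.mem_erase] at ha hb
    exact hc (by simp_all) (by simp_all) (fun h => hab (Subtype.ext h))
  · rw [Finset.card_subtype, Finset.filter_true_of_mem, Finset.card_erase_of_mem hv, hT]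
    · omega
    · intro u hu
      rw [Finset.mem_erase] at hu
      exact ⟨⟨(hadj u hu.2).1.symm, (hadj u hu.2).2.symm⟩, hc hv hu.2 hu.1.symm⟩
end

section
/- Let r and n be integers with 2 ≤ r and n ≥ r+1, and let G be a K_{r+1}-saturated simple graph on n vertices with m edges. Then ∑_{v ∈ V(G)} d(v)² ≥ (r-1)·n·(n-r) + (r-1)·n + 2(r-2)·m, where d(v) denotes the degree of v. -/
open SimpleGraph

/-- Weak-saturation edge bound by contraction of a non-adjacent pair (ordered-pair count). -/
lemma sat_count {V : Type*} [DecidableEq V] (k : ℕ) : ∀ (N : ℕ) (A : Finset V) (F : V → V → Prop)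
    [DecidableRel F],
    A.card = N → (∀ x y, F x y → F y x) → (∀ x, ¬ F x x) →
    (∀ a ∈ A, ∀ b ∈ A, a ≠ b → ¬ F a b → ∃ T ⊆ A, T.card = k ∧
      (∀ x ∈ T, ∀ y ∈ T, x ≠ y → F x y) ∧ ∀ t ∈ T, F a t ∧ F b t) →
    (k : ℤ) * (2 * (A.card : ℤ) - (k + 1)) ≤ ∑ x ∈ A, ∑ y ∈ A, (if F x y then (1 : ℤ) else 0) := by
  intro N
  induction N with
  | zero =>
    intro A F _ hA _ _ _
    have : A = ∅ := Finset.card_eq_zero.mp hA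
    subst this
    simp
    nlinarith
  | succ N ih =>
    intro A F _ hA hsymm hirr hT
    by_cases hc : ∀ a ∈ A, ∀ b ∈ A, a ≠ b → F a b
    · have : ∑ x ∈ A, ∑ y ∈ A, (if F x y then (1 : ℤ) else 0)
          = ∑ x ∈ A, ∑ y ∈ A, (1 - if x = y then (1 : ℤ) else 0) := by
        refine Finset.sum_congr rfl fun x hx => Finset.sum_congr rfl fun y hy => ?_
        by_cases h : x = y
        · subst h; simp [hirr]
        · simp [h, hc x hx y hy h]
      rw [this]
      have h2 : ∑ x ∈ A, ∑ y ∈ A, (1 - if x = y then (1 : ℤ) else 0)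
          = (A.card : ℤ) * A.card - A.card := by
        simp only [Finset.sum_sub_distrib]
        simp
      rw [h2]
      have h3 : 0 ≤ ((A.card : ℤ) - k) * ((A.card : ℤ) - k - 1) := by
        rcases le_or_gt (A.card : ℤ) k with h | h
        · nlinarith
        · have : 0 ≤ (A.card : ℤ) - k - 1 := by omega
          have : 0 ≤ (A.card : ℤ) - k := by omega
          positivity
      nlinarith
    · push Not at hc
      obtain ⟨a, ha, b, hb, hab, hnab⟩ := hc
      have hnba : ¬ F b a := fun h => hnab (hsymm _ _ h)
      classical
      let F' : V → V → Prop := fun x y => F x y ∨ (x = a ∧ F b y) ∨ (y = a ∧ F b x)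
      have hcard : (A.erase b).card = N := by rw [Finset.card_erase_of_mem hb]; omega
      have key := ih (A.erase b) F' hcard
        (by
          rintro x y (h | h | h)
          · exact Or.inl (hsymm _ _ h)
          · exact Or.inr (Or.inr h)
          · exact Or.inr (Or.inl h))
        (by
          rintro x (h | ⟨rfl, h⟩ | ⟨rfl, h⟩)
          · exact hirr _ h
          · exact hnba h
          · exact hnba h)
        (by
          intro x hx y hy hxy hn
          obtain ⟨hxb, hxA⟩ := Finset.mem_erase.mp hx
          obtain ⟨hyb, hyA⟩ := Finset.mem_erase.mp hy
          have hnF : ¬ F x y := fun h => hn (Or.inl h)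
          obtain ⟨T, hTA, hTk, hTc, hTn⟩ := hT x hxA y hyA hxy hnF
          by_cases hbT : b ∈ T
          · have haT : a ∉ T := fun h => hnab (hTc a h b hbT hab)
            refine ⟨insert a (T.erase b), ?_, ?_, ?_, ?_⟩
            · intro z hz
              rcases Finset.mem_insert.mp hz with rfl | hz
              · exact Finset.mem_erase.mpr ⟨hab, ha⟩
              · exact Finset.mem_erase.mpr ⟨(Finset.mem_erase.mp hz).1,
                  hTA (Finset.mem_erase.mp hz).2⟩
            · rw [Finset.card_insert_of_notMem (fun h => haT (Finset.mem_erase.mp h).2),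
                Finset.card_erase_of_mem hbT]
              have : 0 < T.card := Finset.card_pos.mpr ⟨b, hbT⟩
              omega
            · intro z hz w hw hzw
              rcases Finset.mem_insert.mp hz with hz | hz <;>
                rcases Finset.mem_insert.mp hw with hw | hw
              · exact absurd (hz.trans hw.symm) hzw
              · obtain ⟨hw1, hw2⟩ := Finset.mem_erase.mp hw
                exact Or.inr (Or.inl ⟨hz, hTc b hbT w hw2 (Ne.symm hw1)⟩)
              · obtain ⟨hw1, hw2⟩ := Finset.mem_erase.mp hz
                exact Or.inr (Or.inr ⟨hw, hTc b hbT z hw2 (Ne.symm hw1)⟩)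
              · exact Or.inl (hTc z (Finset.mem_erase.mp hz).2 w (Finset.mem_erase.mp hw).2 hzw)
            · intro z hz
              rcases Finset.mem_insert.mp hz with rfl | hz
              · exact ⟨Or.inr (Or.inr ⟨rfl, hsymm _ _ (hTn b hbT).1⟩),
                  Or.inr (Or.inr ⟨rfl, hsymm _ _ (hTn b hbT).2⟩)⟩
              · have := hTn z (Finset.mem_erase.mp hz).2
                exact ⟨Or.inl this.1, Or.inl this.2⟩
          · refine ⟨T, ?_, hTk, fun z hz w hw h => Or.inl (hTc z hz w hw h),
              fun t ht => ⟨Or.inl (hTn t ht).1, Or.inl (hTn t ht).2⟩⟩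
            intro z hz
            exact Finset.mem_erase.mpr ⟨fun h => hbT (h ▸ hz), hTA hz⟩)
      -- counting
      set B := (A.erase b).erase a with hB
      have haE : a ∈ A.erase b := Finset.mem_erase.mpr ⟨hab, ha⟩
      have hsplitA : ∀ f : V → ℤ, ∑ x ∈ A, f x = f b + (f a + ∑ x ∈ B, f x) := by
        intro f
        rw [← Finset.add_sum_erase A f hb, ← Finset.add_sum_erase _ f haE]
      have hsplitE : ∀ f : V → ℤ, ∑ x ∈ A.erase b, f x = f a + ∑ x ∈ B, f x := by
        intro f
        rw [← Finset.add_sum_erase _ f haE]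
      obtain ⟨T, hTA, hTk, hTc, hTn⟩ := hT a ha b hb hab hnab
      have hTB : T ⊆ B := by
        intro t ht
        refine Finset.mem_erase.mpr ⟨?_, Finset.mem_erase.mpr ⟨?_, hTA ht⟩⟩
        · rintro rfl; exact hirr _ (hTn _ ht).1
        · rintro rfl; exact hirr _ (hTn _ ht).2
      have hcommon : (k : ℤ) ≤ ∑ y ∈ B, (if F a y ∧ F b y then (1 : ℤ) else 0) := by
        calc (k : ℤ) = ∑ y ∈ T, (if F a y ∧ F b y then (1 : ℤ) else 0) := by
              rw [Finset.sum_congr rfl (fun t ht => if_pos (hTn t ht))]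
              simp [hTk]
          _ ≤ _ := Finset.sum_le_sum_of_subset_of_nonneg hTB
              (fun _ _ _ => by split_ifs <;> simp)
      have hBB : ∀ x ∈ B, ∀ y ∈ B, (if F' x y then (1 : ℤ) else 0) = if F x y then 1 else 0 := by
        intro x hx y hy
        have hxa := (Finset.mem_erase.mp hx).1
        have hya := (Finset.mem_erase.mp hy).1
        simp [F', hxa, hya]
      have hsym1 : ∀ c x, (if F x c then (1 : ℤ) else 0) = if F c x then 1 else 0 := by
        intro c x
        have : F x c ↔ F c x := ⟨hsymm _ _, hsymm _ _⟩
        simp [this]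
      have haB : ∀ y ∈ B, (if F' a y then (1 : ℤ) else 0)
          = (if F a y then 1 else 0) + (if F b y then 1 else 0)
            - (if F a y ∧ F b y then 1 else 0) := by
        intro y hy
        have hya := (Finset.mem_erase.mp hy).1
        by_cases h1 : F a y <;> by_cases h2 : F b y <;> simp [F', hya, h1, h2]
      have hBa : ∀ y ∈ B, (if F' y a then (1 : ℤ) else 0)
          = (if F a y then 1 else 0) + (if F b y then 1 else 0)
            - (if F a y ∧ F b y then 1 else 0) := by
        intro y hy
        have hya := (Finset.mem_erase.mp hy).1
        have : F y a ↔ F a y := ⟨hsymm _ _, hsymm _ _⟩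
        by_cases h1 : F a y <;> by_cases h2 : F b y <;> simp [F', hya, h1, h2, this]
      have haa : (if F' a a then (1 : ℤ) else 0) = 0 := by
        simp [F', hirr, hnba]
      have e1 : ∑ x ∈ A, ∑ y ∈ A, (if F x y then (1 : ℤ) else 0)
          = 2 * ∑ y ∈ B, (if F a y then (1 : ℤ) else 0)
            + 2 * ∑ y ∈ B, (if F b y then (1 : ℤ) else 0)
            + ∑ x ∈ B, ∑ y ∈ B, (if F x y then (1 : ℤ) else 0) := by
        simp only [hsplitA, Finset.sum_add_distrib]
        simp only [hsym1 a, hsym1 b, hirr, hnab, if_false]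
        ring
      have e2 : ∑ x ∈ A.erase b, ∑ y ∈ A.erase b, (if F' x y then (1 : ℤ) else 0)
          = 2 * ∑ y ∈ B, (if F a y then (1 : ℤ) else 0)
            + 2 * ∑ y ∈ B, (if F b y then (1 : ℤ) else 0)
            - 2 * ∑ y ∈ B, (if F a y ∧ F b y then (1 : ℤ) else 0)
            + ∑ x ∈ B, ∑ y ∈ B, (if F x y then (1 : ℤ) else 0) := by
        simp only [hsplitE, Finset.sum_add_distrib]
        rw [haa, Finset.sum_congr rfl haB, Finset.sum_congr rfl hBa,
          Finset.sum_congr rfl (fun x hx => Finset.sum_congr rfl (hBB x hx))]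
        simp only [Finset.sum_add_distrib, Finset.sum_sub_distrib]
        ring
      have e3 : ((A.erase b).card : ℤ) = (A.card : ℤ) - 1 := by
        rw [hcard, hA]; push_cast; ring
      have key' : (k : ℤ) * (2 * ((A.erase b).card : ℤ) - (k + 1)) ≤
          ∑ x ∈ A.erase b, ∑ y ∈ A.erase b, (if F' x y then (1 : ℤ) else 0) := by
        convert key
      rw [e2, e3] at key'
      rw [e1]
      linarith

/-- In a saturated graph every non-adjacent pair has a common clique of size `s`. -/
lemma exists_common {V : Type*} [DecidableEq V] (s : ℕ) (G : SimpleGraph V)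
    (hsat : IsKSaturated (s + 2) G) (u v : V) (huv : u ≠ v) (hn : ¬ G.Adj u v) :
    ∃ T : Finset V, T.card = s ∧ (∀ x ∈ T, ∀ y ∈ T, x ≠ y → G.Adj x y) ∧
      ∀ t ∈ T, G.Adj u t ∧ G.Adj v t := by
  have h := hsat.2 u v huv hn
  unfold SimpleGraph.CliqueFree at h
  push Not at h
  obtain ⟨K, hK⟩ := h
  have hKc := hK.isClique
  have hKn := hK.card_eq
  have hadj : ∀ x ∈ K, ∀ y ∈ K, x ≠ y → G.Adj x y ∨ (x = u ∧ y = v) ∨ (x = v ∧ y = u) := by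
    intro x hx y hy hxy
    have := hKc hx hy hxy
    simp only [SimpleGraph.sup_adj, SimpleGraph.fromEdgeSet_adj, Set.mem_singleton_iff,
      Sym2.eq_iff] at this
    tauto
  have hmem : u ∈ K ∧ v ∈ K := by
    by_contra hcon
    apply hsat.1 K
    refine ⟨?_, hKn⟩
    intro x hx y hy hxy
    have hx' : x ∈ K := hx
    have hy' : y ∈ K := hy
    rcases hadj x hx y hy hxy with h | ⟨rfl, rfl⟩ | ⟨rfl, rfl⟩
    · exact h
    · exact absurd ⟨hx', hy'⟩ hcon
    · exact absurd ⟨hy', hx'⟩ hcon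
  refine ⟨(K.erase u).erase v, ?_, ?_, ?_⟩
  · rw [Finset.card_erase_of_mem (Finset.mem_erase.mpr ⟨huv.symm, hmem.2⟩),
      Finset.card_erase_of_mem hmem.1, hKn]
    omega
  · intro x hx y hy hxy
    simp only [Finset.mem_erase] at hx hy
    rcases hadj x hx.2.2 y hy.2.2 hxy with h | h | h
    · exact h
    · exact absurd h.1 hx.2.1
    · exact absurd h.1 hx.1
  · intro t ht
    simp only [Finset.mem_erase] at ht
    constructor
    · rcases hadj u hmem.1 t ht.2.2 (Ne.symm ht.2.1) with h | h | h
      · exact h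
      · exact absurd h.2 ht.1
      · exact absurd h.2 ht.2.1
    · rcases hadj v hmem.2 t ht.2.2 (Ne.symm ht.1) with h | h | h
      · exact h
      · exact absurd h.2 ht.1
      · exact absurd h.2 ht.2.1

theorem stmt_11 {V : Type*} [Fintype V] [DecidableEq V] (r n : ℕ) (hr : 2 ≤ r)
    (hn : r + 1 ≤ n) (hcard : Fintype.card V = n)
    (G : SimpleGraph V) [DecidableRel G.Adj] (hsat : IsKSaturated (r + 1) G) :
    ∑ v : V, (G.degree v : ℤ) ^ 2
      ≥ ((r : ℤ) - 1) * (n : ℤ) * ((n : ℤ) - (r : ℤ)) + ((r : ℤ) - 1) * (n : ℤ)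
        + 2 * ((r : ℤ) - 2) * (G.edgeFinset.card : ℤ) := by
  classical
  obtain ⟨k, rfl⟩ : ∃ k, r = k + 2 := ⟨r - 2, by omega⟩
  have hT : ∀ z : Sym2 V, ∃ T : Finset V, ∀ a b, z = s(a, b) → a ≠ b → ¬ G.Adj a b →
      T.card = k + 1 ∧ (∀ x ∈ T, ∀ y ∈ T, x ≠ y → G.Adj x y) ∧
      ∀ t ∈ T, G.Adj a t ∧ G.Adj b t := by
    intro z
    induction z using Sym2.ind with
    | _ u v =>
      by_cases h : u ≠ v ∧ ¬ G.Adj u v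
      · obtain ⟨T, h1, h2, h3⟩ := exists_common (k + 1) G hsat u v h.1 h.2
        refine ⟨T, fun a b hab _ _ => ⟨h1, h2, ?_⟩⟩
        rcases Sym2.eq_iff.mp hab with ⟨rfl, rfl⟩ | ⟨rfl, rfl⟩
        · exact h3
        · exact fun t ht => (h3 t ht).symm
      · refine ⟨∅, fun a b hab h1 h2 => absurd ?_ h⟩
        rcases Sym2.eq_iff.mp hab with ⟨rfl, rfl⟩ | ⟨rfl, rfl⟩
        · exact ⟨h1, h2⟩
        · exact ⟨h1.symm, fun h => h2 h.symm⟩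
  choose T hT using hT
  let F : V → V → V → Prop := fun v a b => a ≠ b ∧ (G.Adj a b ∨ v ∉ T s(a, b))
  -- link bound
  have hlink : ∀ v : V, (k : ℤ) * (2 * (G.degree v : ℤ) - (k + 1)) ≤
      ∑ a ∈ G.neighborFinset v, ∑ b ∈ G.neighborFinset v, (if F v a b then (1 : ℤ) else 0) := by
    intro v
    refine sat_count k _ (G.neighborFinset v) (F v) rfl ?_ ?_ ?_
    · rintro x y ⟨h1, h2⟩
      refine ⟨h1.symm, ?_⟩
      rw [Sym2.eq_swap]
      exact h2.imp (fun h => h.symm) id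
    · rintro x ⟨h, _⟩
      exact h rfl
    · intro a ha b hb hab hnF
      have hnadj : ¬ G.Adj a b := fun h => hnF ⟨hab, Or.inl h⟩
      have hv : v ∈ T s(a, b) := by
        by_contra h
        exact hnF ⟨hab, Or.inr h⟩
      obtain ⟨h1, h2, h3⟩ := hT _ a b rfl hab hnadj
      refine ⟨(T s(a, b)).erase v, ?_, ?_, ?_, ?_⟩
      · intro t ht
        obtain ⟨ht1, ht2⟩ := Finset.mem_erase.mp ht
        rw [SimpleGraph.mem_neighborFinset]
        exact h2 v hv t ht2 ht1.symm
      · rw [Finset.card_erase_of_mem hv, h1]; omega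
      · intro x hx y hy hxy
        exact ⟨hxy, Or.inl (h2 x (Finset.mem_erase.mp hx).2 y (Finset.mem_erase.mp hy).2 hxy)⟩
      · intro t ht
        have := h3 t (Finset.mem_erase.mp ht).2
        exact ⟨⟨this.1.ne, Or.inl this.1⟩, ⟨this.2.ne, Or.inl this.2⟩⟩
  -- indicator identity
  have hdeg : ∀ v, (G.degree v : ℤ) = ∑ a, if G.Adj v a then (1 : ℤ) else 0 := by
    intro v
    rw [← SimpleGraph.card_neighborFinset_eq_degree, SimpleGraph.neighborFinset_eq_filter]
    simp
  have hsplit : ∀ v, (G.degree v : ℤ) ^ 2 =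
      ∑ a ∈ G.neighborFinset v, ∑ b ∈ G.neighborFinset v, (if F v a b then (1 : ℤ) else 0)
      + G.degree v
      + ∑ a, ∑ b, (if a ≠ b ∧ ¬ G.Adj a b ∧ v ∈ T s(a, b) then (1 : ℤ) else 0) := by
    intro v
    have h1 : (G.degree v : ℤ) ^ 2 = ∑ a ∈ G.neighborFinset v, ∑ b ∈ G.neighborFinset v, (1:ℤ) := by
      simp [sq]
    have h2 : (G.degree v : ℤ) = ∑ a ∈ G.neighborFinset v, ∑ b ∈ G.neighborFinset v,
        (if a = b then (1:ℤ) else 0) := by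
      rw [Finset.sum_congr rfl (fun a ha => by
        rw [Finset.sum_ite_eq, if_pos ha])]
      simp
    have h3 : ∑ a, ∑ b, (if a ≠ b ∧ ¬ G.Adj a b ∧ v ∈ T s(a, b) then (1 : ℤ) else 0)
        = ∑ a ∈ G.neighborFinset v, ∑ b ∈ G.neighborFinset v,
          (if a ≠ b ∧ ¬ G.Adj a b ∧ v ∈ T s(a, b) then (1 : ℤ) else 0) := by
      symm
      rw [← Finset.sum_product', ← Finset.sum_product']
      apply Finset.sum_subset (Finset.subset_univ _ )
      rintro ⟨a, b⟩ _ hab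
      apply if_neg
      rintro ⟨p, q, t⟩
      apply hab
      have := (hT _ a b rfl p q).2.2 v t
      simp [this.1.symm, this.2.symm]
    rw [h1, h3, h2]
    simp only [← Finset.sum_add_distrib]
    refine Finset.sum_congr rfl fun a ha => Finset.sum_congr rfl fun b hb => ?_
    by_cases p : a = b <;> by_cases q : G.Adj a b <;> by_cases t : v ∈ T s(a, b) <;>
      simp_all [F]
  have hsumdeg : ∑ v, (G.degree v : ℤ) = 2 * (G.edgeFinset.card : ℤ) := by
    exact_mod_cast G.sum_degrees_eq_twice_card_edges
  have hnon : ∑ v, ∑ a, ∑ b, (if a ≠ b ∧ ¬ G.Adj a b ∧ v ∈ T s(a, b) then (1 : ℤ) else 0)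
      = ((k : ℤ) + 1) * ((n : ℤ) ^ 2 - n - 2 * (G.edgeFinset.card : ℤ)) := by
    rw [Finset.sum_comm]
    have h1 : ∀ a b, ∑ v, (if a ≠ b ∧ ¬ G.Adj a b ∧ v ∈ T s(a, b) then (1 : ℤ) else 0)
        = ((k : ℤ) + 1) * (1 - (if a = b then 1 else 0) - if G.Adj a b then 1 else 0) := by
      intro a b
      by_cases p : a = b
      · subst p; simp
      · by_cases q : G.Adj a b
        · simp [p, q]
        · have := (hT _ a b rfl p q).1
          simp [p, q, this]
    have h2 : ∀ a, ∑ v, ∑ b, (if a ≠ b ∧ ¬ G.Adj a b ∧ v ∈ T s(a, b) then (1 : ℤ) else 0)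
        = ((k : ℤ) + 1) * ((n : ℤ) - 1 - G.degree a) := by
      intro a
      rw [Finset.sum_comm, Finset.sum_congr rfl (fun b _ => h1 a b), ← Finset.mul_sum,
        Finset.sum_sub_distrib, Finset.sum_sub_distrib, ← hdeg]
      simp [hcard]
    rw [Finset.sum_congr rfl (fun a _ => h2 a), ← Finset.mul_sum, Finset.sum_sub_distrib, hsumdeg]
    simp only [Finset.sum_const, Finset.card_univ, hcard, nsmul_eq_mul]
    ring
  have hL := Finset.sum_le_sum (fun v (_ : v ∈ Finset.univ) => hlink v)
  rw [← Finset.mul_sum, Finset.sum_sub_distrib, ← Finset.mul_sum, hsumdeg] at hL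
  rw [Finset.sum_congr rfl (fun v _ => hsplit v), Finset.sum_add_distrib, Finset.sum_add_distrib,
    hnon, hsumdeg]
  simp only [Finset.sum_const, Finset.card_univ, hcard, nsmul_eq_mul] at hL
  push_cast
  nlinarith [hL]
end
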